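/- arXiv:1603.04462 — 2 statements merged into one kernel-verified Lean document; each statement's English description precedes it below -/
import Mathlib

section
/- For every 0 < γ < 1/4 there exists n₀ such that for every 3-uniform hypergraph H=(V,E) on n > n₀ vertices with δ₁(H) ≥ (1/4 + γ)·C(n,2) there is a set R ⊆ V of size at most γn with the following property: for every system (a_i,b_i)_{i∈[k]} of k ≤ γ³n/12 mutually disjoint pairs of distinct vertices of V there is a set of triples connecting (a_i,b_i)_{i∈[k]} which contains vertices from R only. -/
open Finset

/-- The triples `(x i, y i, z i)` connect the mutually disjoint pairs `(a i, b i)`: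
all `5m` vertices involved are distinct and `{a i, x i, y i}` and `{y i, z i, b i}`
are edges of `H` for every `i`. -/
def Connects {V : Type} [DecidableEq V] (H : Finset (Finset V)) (m : ℕ)
    (a b x y z : Fin m → V) : Prop :=
  Function.Injective (fun p : Fin m × Fin 5 => ![a p.1, b p.1, x p.1, y p.1, z p.1] p.2) ∧
  ∀ i : Fin m, ({a i, x i, y i} : Finset V) ∈ H ∧ ({y i, z i, b i} : Finset V) ∈ H

/-!
Choose `R` at random, keeping each vertex independently with probability `ρ / 2`. Except with
exponentially small probability, `R` meets a given set of linear size in linearly many vertices,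
so one `R` serves any `O(n²)` such sets simultaneously.

The link graph of `v` has edge density at least `1/4 + γ`. Few edges meet its vertices of small
degree, so the others must number at least `(1/2 + γ/4) n` to span the rest. Hence for any `u`, `v`
linearly many `y` have large degree in both links, and `x`, `z` may then be chosen among the
neighbours of `y` in the link of `u` and of `v`. As `R` meets all these sets in at least `5k`
vertices, the connecting triples can be picked greedily.
-/

section RandomSubset

variable {V : Type*} [Fintype V] [DecidableEq V]

/-- The probability that the random subset of `V` containing each point independently with
probability `p` is equal to `R`. -/
def bernoulliWeight {K : Type*} [CommRing K] (p : K) (R : Finset V) : K :=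
  p ^ #R * (1 - p) ^ #Rᶜ

lemma sum_bernoulliWeight_mul_pow_card_inter {K : Type*} [CommRing K] (p q : K) (S : Finset V) :
    ∑ R, bernoulliWeight p R * q ^ #(R ∩ S) = (1 + p * (q - 1)) ^ #S := by
  calc ∑ R, bernoulliWeight p R * q ^ #(R ∩ S)
      = ∑ R, (∏ v ∈ R, p * if v ∈ S then q else 1) * ∏ v ∈ Rᶜ, (1 - p) := by
        refine sum_congr rfl fun R _ => ?_
        rw [prod_mul_distrib, prod_const, prod_ite_mem, prod_const, prod_const, bernoulliWeight]
        ring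
    _ = ∏ v, ((p * if v ∈ S then q else 1) + (1 - p)) := (Fintype.prod_add _ _).symm
    _ = ∏ v, if v ∈ S then 1 + p * (q - 1) else 1 :=
        prod_congr rfl fun v _ => by split_ifs <;> ring
    _ = (1 + p * (q - 1)) ^ #S := by rw [Fintype.prod_ite_mem, prod_const]

lemma sum_bernoulliWeight {K : Type*} [CommRing K] (p : K) :
    ∑ R : Finset V, bernoulliWeight p R = 1 := by
  simpa using sum_bernoulliWeight_mul_pow_card_inter p 1 (∅ : Finset V)

lemma bernoulliWeight_nonneg {p : ℝ} (hp0 : 0 ≤ p) (hp1 : p ≤ 1) (R : Finset V) :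
    0 ≤ bernoulliWeight p R :=
  mul_nonneg (pow_nonneg hp0 _) (pow_nonneg (sub_nonneg.2 hp1) _)

lemma exists_lt_of_sum_bernoulliWeight_mul_lt {p c : ℝ} (hp0 : 0 ≤ p) (hp1 : p ≤ 1)
    {X : Finset V → ℝ} (h : ∑ R, bernoulliWeight p R * X R < c) : ∃ R, X R < c := by
  have hc : ∑ R : Finset V, bernoulliWeight p R * c = c := by
    rw [← sum_mul, sum_bernoulliWeight, one_mul]
  obtain ⟨R, -, hR⟩ := exists_lt_of_sum_lt (h.trans_eq hc.symm)
  exact ⟨R, lt_of_mul_lt_mul_left hR (bernoulliWeight_nonneg hp0 hp1 R)⟩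

/-- Markov's inequality for `2 ^ #R` and for the variables `2 ^ (-#(R ∩ S))`, with a union
bound. -/
lemma exists_card_le_and_le_card_inter_of_sum_lt_one {p : ℝ} (hp0 : 0 ≤ p) (hp1 : p ≤ 1)
    (𝓕 : Finset (Finset V)) (r s : ℝ)
    (h : ∑ S ∈ 𝓕, 2 ^ s * (1 + -(p / 2)) ^ #S + 2 ^ (-r) * (1 + p) ^ Fintype.card V < 1) :
    ∃ R : Finset V, #R ≤ r ∧ ∀ S ∈ 𝓕, s ≤ #(R ∩ S) := by
  let X : Finset V → ℝ := fun R =>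
    ∑ S ∈ 𝓕, 2 ^ s * (1 / 2) ^ #(R ∩ S) + 2 ^ (-r) * 2 ^ #(R ∩ univ)
  have expectation : ∑ R, bernoulliWeight p R * X R
      = ∑ S ∈ 𝓕, 2 ^ s * (1 + -(p / 2)) ^ #S + 2 ^ (-r) * (1 + p) ^ Fintype.card V := by
    simp only [X, mul_add, mul_sum, sum_add_distrib, mul_left_comm (bernoulliWeight p _)]
    rw [sum_comm]
    simp only [← mul_sum, sum_bernoulliWeight_mul_pow_card_inter, card_univ]
    ring_nf
  obtain ⟨R, hR⟩ := exists_lt_of_sum_bernoulliWeight_mul_lt hp0 hp1 (expectation.trans_lt h)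
  have term_nonneg : ∀ S ∈ 𝓕, (0 : ℝ) ≤ 2 ^ s * (1 / 2) ^ #(R ∩ S) := fun S _ => by positivity
  refine ⟨R, ?_, fun S hS => ?_⟩
  · have card_term_lt : (2 : ℝ) ^ (-r) * 2 ^ #R < 1 := by
      simpa using (le_add_of_nonneg_left (sum_nonneg term_nonneg)).trans_lt hR
    rw [← Real.rpow_add_natCast two_ne_zero, Real.rpow_lt_one_iff_of_pos two_pos] at card_term_lt
    linarith [card_term_lt.resolve_right (by norm_num)]
  · have inter_term_lt : (2 : ℝ) ^ s * (1 / 2) ^ #(R ∩ S) < 1 :=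
      ((single_le_sum term_nonneg hS).trans (le_add_of_nonneg_right (by positivity))).trans_lt hR
    rw [one_div, inv_pow, ← div_eq_mul_inv, ← Real.rpow_sub_natCast two_ne_zero,
      Real.rpow_lt_one_iff_of_pos two_pos] at inter_term_lt
    linarith [inter_term_lt.resolve_right (by norm_num)]

lemma two_rpow_mul_one_add_pow_le_exp {t : ℝ} (ht : -1 ≤ t) (s : ℝ) (m : ℕ) :
    2 ^ s * (1 + t) ^ m ≤ Real.exp (Real.log 2 * s + t * m) := by
  rw [Real.exp_add, ← Real.rpow_def_of_pos two_pos, mul_comm t, Real.exp_nat_mul, add_comm 1 t]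
  gcongr
  · linarith
  · exact Real.add_one_le_exp t

lemma exists_card_le_and_le_card_inter {α ρ : ℝ} (hα : 0 ≤ α) (hρ0 : 0 ≤ ρ) (hρ1 : ρ ≤ 1)
    {n : ℕ} (hn : Fintype.card V = n) {𝓕 : Finset (Finset V)} (hlarge : ∀ S ∈ 𝓕, α * n ≤ #S)
    (hfew : #𝓕 * Real.exp (-(α * ρ / 16 * n)) + Real.exp (-(ρ / 6 * n)) < 1) :
    ∃ R : Finset V, #R ≤ ρ * n ∧ ∀ S ∈ 𝓕, α * ρ / 4 * n ≤ #(R ∩ S) := by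
  have hρn : 0 ≤ ρ * n := by positivity
  have inter_bound : ∀ S ∈ 𝓕, (2 : ℝ) ^ (α * ρ / 4 * n) * (1 + -(ρ / 2 / 2)) ^ #S
      ≤ Real.exp (-(α * ρ / 16 * n)) := fun S hS => by
    refine (two_rpow_mul_one_add_pow_le_exp (by linarith) _ _).trans (Real.exp_le_exp.2 ?_)
    have mean_ge : α * (ρ * n) ≤ ρ * #S := by nlinarith [hlarge S hS]
    nlinarith [Real.log_two_lt_d9, mul_nonneg hα hρn]
  have card_bound : (2 : ℝ) ^ (-(ρ * n)) * (1 + ρ / 2) ^ n ≤ Real.exp (-(ρ / 6 * n)) := by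
    refine (two_rpow_mul_one_add_pow_le_exp (by linarith) _ _).trans (Real.exp_le_exp.2 ?_)
    nlinarith [Real.log_two_gt_d9]
  refine exists_card_le_and_le_card_inter_of_sum_lt_one (p := ρ / 2) (by linarith) (by linarith)
    𝓕 _ _ (lt_of_le_of_lt (add_le_add ?_ (hn ▸ card_bound)) hfew)
  simpa only [sum_const, nsmul_eq_mul] using sum_le_sum inter_bound

end RandomSubset

lemma eventually_mul_pow_mul_exp_neg_add_exp_neg_lt_one {b c : ℝ} (hb : 0 < b) (hc : 0 < c)
    (C : ℝ) (d : ℕ) :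
    ∀ᶠ n : ℕ in Filter.atTop,
      C * (n : ℝ) ^ d * Real.exp (-(b * n)) + Real.exp (-(c * n)) < 1 := by
  have geometric : ∀ {a : ℝ}, 0 < a → ∀ j : ℕ, Filter.Tendsto
      (fun n : ℕ => (n : ℝ) ^ j * Real.exp (-(a * n))) Filter.atTop (nhds 0) := by
    intro a ha j
    have := tendsto_pow_const_mul_const_pow_of_abs_lt_one j (r := Real.exp (-a))
      (by rw [Real.abs_exp]; exact Real.exp_lt_one_iff.2 (neg_neg_of_pos ha))
    simpa only [← Real.exp_nat_mul, mul_neg, mul_comm a] using this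
  have limit := ((geometric hb d).const_mul C).add (geometric hc 0)
  simp only [pow_zero, one_mul, mul_zero, add_zero, ← mul_assoc] at limit
  exact limit.eventually_lt_const one_pos

lemma mul_le_card_inter_of_le_card {V : Type*} [Fintype V] [DecidableEq V] {n : ℕ}
    (hV : Fintype.card V = n) {A B : Finset V} {β : ℝ} (hA : (1 / 2 + β / 2) * n ≤ #A)
    (hB : (1 / 2 + β / 2) * n ≤ #B) : β * n ≤ #(A ∩ B) := by
  have union_le : (#(A ∪ B) : ℝ) ≤ n := by exact_mod_cast hV ▸ card_le_univ (A ∪ B)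
  have incl_excl : (#(A ∪ B) : ℝ) + #(A ∩ B) = #A + #B := by
    exact_mod_cast card_union_add_card_inter A B
  linarith

section HighDegree

variable {V : Type*} [Fintype V] (G : SimpleGraph V) [DecidableRel G.Adj]

/-- The vertices of `G` of degree at least `c`. -/
noncomputable def highDegree (c : ℝ) : Finset V := {v | c ≤ G.degree v}

variable {G} in
lemma mem_highDegree {c : ℝ} {v : V} : v ∈ highDegree G c ↔ c ≤ G.degree v := by
  simp only [highDegree, mem_filter, mem_univ, true_and]

lemma card_edgeFinset_le_choose_two_add_sum_degree_compl [DecidableEq V] (A : Finset V) :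
    #G.edgeFinset ≤ (#A).choose 2 + ∑ v ∈ Aᶜ, G.degree v := by
  have cover : G.edgeFinset ⊆ A.offDiag.image Sym2.mk.uncurry ∪
      Aᶜ.biUnion (G.incidenceFinset ·) := by
    intro e
    induction e with | _ x y
    intro he
    have hxy : G.Adj x y := by simpa using he
    by_cases hA : x ∈ A ∧ y ∈ A
    · exact mem_union_left _ (mem_image.2 ⟨(x, y), mem_offDiag.2 ⟨hA.1, hA.2, hxy.ne⟩, rfl⟩)
    · refine mem_union_right _ (mem_biUnion.2 ?_)
      rcases not_and_or.1 hA with hx | hy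
      · exact ⟨x, mem_compl.2 hx, by simpa using G.mk'_mem_incidenceSet_left_iff.2 hxy⟩
      · exact ⟨y, mem_compl.2 hy, by simpa using G.mk'_mem_incidenceSet_right_iff.2 hxy⟩
  calc #G.edgeFinset
      ≤ #(A.offDiag.image Sym2.mk.uncurry) + ∑ v ∈ Aᶜ, #(G.incidenceFinset v) :=
        (card_le_card cover).trans ((card_union_le _ _).trans (by gcongr; exact card_biUnion_le))
    _ = (#A).choose 2 + ∑ v ∈ Aᶜ, G.degree v := by
        simp only [Sym2.card_image_offDiag, G.card_incidenceFinset_eq_degree]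

lemma card_edgeFinset_le_choose_two_highDegree_add {n : ℕ} (hV : Fintype.card V = n) (c : ℝ) :
    (#G.edgeFinset : ℝ) ≤ (#(highDegree G c)).choose 2 + (n - #(highDegree G c)) * c := by
  classical
  have card_compl_cast : (#(highDegree G c)ᶜ : ℝ) = n - #(highDegree G c) := by
    rw [card_compl, hV, Nat.cast_sub (hV ▸ card_le_univ _)]
  have sum_le : ∑ v ∈ (highDegree G c)ᶜ, (G.degree v : ℝ) ≤ (n - #(highDegree G c)) * c := by
    rw [← card_compl_cast, ← nsmul_eq_mul]
    exact sum_le_card_nsmul _ _ _ fun v hv =>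
      le_of_not_ge fun h => mem_compl.1 hv (mem_highDegree.2 h)
  refine le_trans ?_ (add_le_add_right sum_le _)
  exact_mod_cast card_edgeFinset_le_choose_two_add_sum_degree_compl G (highDegree G c)

lemma le_card_highDegree {γ : ℝ} (hγ : 0 < γ) {n : ℕ} (hV : Fintype.card V = n) (hn : 4 < n)
    (hG : (1 / 4 + γ) * n.choose 2 ≤ #G.edgeFinset) :
    (1 / 2 + γ / 4) * n ≤ #(highDegree G (γ / 2 * n)) := by
  have hγ_le : γ ≤ 3 / 4 := by
    have choose_pos : (0 : ℝ) < n.choose 2 := by exact_mod_cast Nat.choose_pos (by omega)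
    have total : (#G.edgeFinset : ℝ) ≤ n.choose 2 := by
      exact_mod_cast hV ▸ G.card_edgeFinset_le_card_choose_two
    nlinarith
  set A := highDegree G (γ / 2 * n)
  have edges_le : (#G.edgeFinset : ℝ) ≤ (#A).choose 2 + (n - #A) * (γ / 2 * n) :=
    card_edgeFinset_le_choose_two_highDegree_add G hV _
  have quadratic : (1 / 4 + γ) * (n * (n - 1)) ≤ #A * (#A - 1 - γ * n) + γ * n ^ 2 := by
    rw [Nat.cast_choose_two] at hG edges_le
    linarith
  have hn' : (4 : ℝ) < n := by exact_mod_cast hn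
  by_contra! hlt
  -- The right side of `quadratic` is convex in `#A`: it is too small at both ends of the range.
  rcases le_total (#A : ℝ) (1 + γ * n) with hA | hA
  · have product_nonpos : (#A : ℝ) * (#A - 1 - γ * n) ≤ 0 :=
      mul_nonpos_of_nonneg_of_nonpos (by positivity) (by linarith)
    nlinarith
  · have product_le : (#A : ℝ) * (#A - 1 - γ * n)
        ≤ (1 / 2 + γ / 4) * n * ((1 / 2 + γ / 4) * n - 1 - γ * n) := by
      gcongr
      linarith
    nlinarith [mul_pos hγ (by linarith : (0 : ℝ) < n), sq_nonneg (γ * n)]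

end HighDegree

section LinkGraph

variable {V : Type*} [DecidableEq V] (H : Finset (Finset V))

/-- The link graph of the vertex `v` in the 3-uniform hypergraph `H`: its edges are the pairs
forming an edge of `H` together with `v`. -/
def linkGraph (v : V) : SimpleGraph V where
  Adj x y := x ≠ y ∧ {v, x, y} ∈ H
  symm := ⟨fun x y h => ⟨h.1.symm, pair_comm x y ▸ h.2⟩⟩
  loopless := ⟨fun _ h => h.1 rfl⟩

instance (v : V) : DecidableRel (linkGraph H v).Adj := fun x y =>
  inferInstanceAs (Decidable (x ≠ y ∧ {v, x, y} ∈ H))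

variable [Fintype V]

lemma card_filter_mem_le_card_edgeFinset_linkGraph {H : Finset (Finset V)}
    (h3 : ∀ e ∈ H, #e = 3) (v : V) : #{e ∈ H | v ∈ e} ≤ #(linkGraph H v).edgeFinset := by
  refine card_le_card_of_surjOn (fun p : Sym2 V => insert v p.toFinset) fun e he => ?_
  obtain ⟨heH, hve⟩ := mem_filter.1 he
  obtain ⟨x, y, hxy, hpair⟩ := card_eq_two.1 (by rw [card_erase_of_mem hve, h3 e heH] :
    #(e.erase v) = 2)
  have he_eq : {v, x, y} = e := by rw [← hpair, insert_erase hve]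
  refine ⟨s(x, y), ?_, by simpa only [Sym2.toFinset_mk_eq] using he_eq⟩
  have adj : (linkGraph H v).Adj x y := ⟨hxy, he_eq ▸ heH⟩
  simpa using adj

/-- The sets from which connecting vertices are picked: the candidates for the middle vertex `y`
connecting some pair `(u, v)`, and the candidates completing `u` and such a `y` to an edge. The
parameter `c` is the degree that `y` must have in the link graphs of `u` and `v`. -/
noncomputable def connectorSets (c : ℝ) : Finset (Finset V) :=
  (univ.image fun p : V × V => highDegree (linkGraph H p.1) c ∩ highDegree (linkGraph H p.2) c) ∪
    ({p : V × V | p.2 ∈ highDegree (linkGraph H p.1) c} : Finset (V × V)).image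
      fun p => (linkGraph H p.1).neighborFinset p.2

variable {H}

lemma inter_mem_connectorSets (c : ℝ) (u v : V) :
    highDegree (linkGraph H u) c ∩ highDegree (linkGraph H v) c ∈ connectorSets H c :=
  mem_union_left _ (mem_image.2 ⟨(u, v), mem_univ _, rfl⟩)

lemma neighborFinset_mem_connectorSets {c : ℝ} {u y : V}
    (hy : y ∈ highDegree (linkGraph H u) c) :
    (linkGraph H u).neighborFinset y ∈ connectorSets H c :=
  mem_union_right _ (mem_image.2 ⟨(u, y), by simpa using hy, rfl⟩)

variable (H) in
lemma card_connectorSets_le (c : ℝ) : #(connectorSets H c) ≤ 2 * Fintype.card V ^ 2 := by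
  refine (card_union_le _ _).trans ?_
  rw [two_mul, sq, ← Fintype.card_prod]
  exact add_le_add card_image_le (card_image_le.trans (card_le_univ _))

lemma le_card_of_mem_connectorSets {γ : ℝ} (hγ : 0 < γ) {n : ℕ} (hV : Fintype.card V = n)
    (hn : 4 < n) (h3 : ∀ e ∈ H, #e = 3)
    (hdeg : ∀ v : V, (1 / 4 + γ) * n.choose 2 ≤ #{e ∈ H | v ∈ e}) {S : Finset V}
    (hS : S ∈ connectorSets H (γ / 2 * n)) : γ / 2 * n ≤ #S := by
  have highDegree_large (v : V) :
      (1 / 2 + γ / 2 / 2) * n ≤ #(highDegree (linkGraph H v) (γ / 2 * n)) := by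
    have link_edges : (1 / 4 + γ) * n.choose 2 ≤ #(linkGraph H v).edgeFinset :=
      (hdeg v).trans (by exact_mod_cast card_filter_mem_le_card_edgeFinset_linkGraph h3 v)
    linarith [le_card_highDegree (linkGraph H v) hγ hV hn link_edges]
  rcases mem_union.1 hS with hS | hS <;> obtain ⟨⟨u, v⟩, hp, rfl⟩ := mem_image.1 hS
  · exact mul_le_card_inter_of_le_card hV (highDegree_large u) (highDegree_large v)
  · simpa [mem_highDegree] using hp

end LinkGraph

section Greedy

lemma injective_cons_of_injective {α κ : Type*} {k : ℕ} {w₀ : κ → α} {w : Fin k → κ → α}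
    (hw₀ : Function.Injective w₀) (hw : Function.Injective (fun p : Fin k × κ => w p.1 p.2))
    (hne : ∀ c i d, w₀ c ≠ w i d) :
    Function.Injective (fun p : Fin (k + 1) × κ =>
      (Fin.cons w₀ w : Fin (k + 1) → κ → α) p.1 p.2) := by
  rintro ⟨i, c⟩ ⟨j, d⟩ hij
  cases i using Fin.cases with
  | zero =>
    cases j using Fin.cases with
    | zero => exact congrArg _ (hw₀ hij)
    | succ j => exact (hne c j d hij).elim
  | succ i =>
    cases j using Fin.cases with
    | zero => exact (hne d i c hij.symm).elim
    | succ j =>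
      obtain ⟨rfl, rfl⟩ := Prod.ext_iff.1 (@hw (i, c) (j, d) hij)
      rfl

lemma exists_injective_uncurry_of_forall_exists {α κ : Type*} [Fintype κ] {k N : ℕ}
    {P : Fin k → (κ → α) → Prop} {A : Finset α} (hN : #A + Fintype.card κ * k ≤ N)
    (h : ∀ i, ∀ B : Finset α, #B + Fintype.card κ ≤ N →
      ∃ w : κ → α, Function.Injective w ∧ (∀ c, w c ∉ B) ∧ P i w) :
    ∃ w : Fin k → κ → α, Function.Injective (fun p : Fin k × κ => w p.1 p.2) ∧
      (∀ i c, w i c ∉ A) ∧ ∀ i, P i (w i) := by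
  classical
  induction k generalizing A with
  | zero => exact ⟨Fin.elim0, fun p => p.1.elim0, fun i => i.elim0, fun i => i.elim0⟩
  | succ k ih =>
    obtain ⟨w₀, inj₀, notMem₀, hw₀⟩ := h 0 A (by
      linarith [Nat.le_mul_of_pos_right (Fintype.card κ) k.succ_pos])
    have hN' : #(A ∪ univ.image w₀) + Fintype.card κ * k ≤ N := by
      have image_le : #(univ.image w₀) ≤ Fintype.card κ := card_image_le
      linarith [card_union_le A (univ.image w₀), Nat.mul_succ (Fintype.card κ) k]
    obtain ⟨w, inj, notMem, hw⟩ := ih hN' fun i => h i.succ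
    have w₀_ne : ∀ c i d, w₀ c ≠ w i d := fun c i d hcd =>
      notMem i d (hcd ▸ mem_union_right _ (mem_image_of_mem _ (mem_univ c)))
    exact ⟨Fin.cons w₀ w, injective_cons_of_injective inj₀ inj w₀_ne,
      Fin.cases notMem₀ fun i c hc => notMem i c (mem_union_left _ hc), Fin.cases hw₀ hw⟩

lemma injective_append_of_injective {ι α : Type*} {l m : ℕ} {u : ι → Fin l → α}
    {w : ι → Fin m → α} (hu : Function.Injective (fun p : ι × Fin l => u p.1 p.2))
    (hw : Function.Injective (fun p : ι × Fin m => w p.1 p.2)) (huw : ∀ i j c d, u i c ≠ w j d) :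
    Function.Injective (fun p : ι × Fin (l + m) => Fin.append (u p.1) (w p.1) p.2) := by
  rintro ⟨i, s⟩ ⟨j, t⟩ h
  induction s using Fin.addCases <;> induction t using Fin.addCases <;>
    simp only [Fin.append_left, Fin.append_right] at h
  · obtain ⟨rfl, rfl⟩ := Prod.ext_iff.1 (@hu (i, _) (j, _) h); rfl
  · exact (huw _ _ _ _ h).elim
  · exact (huw _ _ _ _ h.symm).elim
  · obtain ⟨rfl, rfl⟩ := Prod.ext_iff.1 (@hw (i, _) (j, _) h); rfl

end Greedy

section Connecting

lemma exists_mem_inter_notMem {α : Type*} [DecidableEq α] {R S B : Finset α} (h : #B < #(R ∩ S)) :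
    ∃ x ∈ R, x ∈ S ∧ x ∉ B := by
  obtain ⟨x, hx, hxB⟩ := exists_mem_notMem_of_card_lt_card h
  exact ⟨x, (mem_inter.1 hx).1, (mem_inter.1 hx).2, hxB⟩

lemma exists_connecting_triple {V : Type*} [Fintype V] [DecidableEq V] {H : Finset (Finset V)}
    {c : ℝ} {R : Finset V} {N : ℕ} (hR : ∀ S ∈ connectorSets H c, N ≤ #(R ∩ S)) (u v : V)
    {B : Finset V} (hB : #B + 3 ≤ N) :
    ∃ w : Fin 3 → V, Function.Injective w ∧ (∀ t, w t ∉ B) ∧ (∀ t, w t ∈ R) ∧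
      {u, w 0, w 1} ∈ H ∧ {w 1, w 2, v} ∈ H := by
  obtain ⟨y, hyR, hy, hyB⟩ := exists_mem_inter_notMem (B := B)
    (lt_of_lt_of_le (by omega) (hR _ (inter_mem_connectorSets c u v)))
  obtain ⟨hyu, hyv⟩ := mem_inter.1 hy
  obtain ⟨x, hxR, hx, hxB⟩ := exists_mem_inter_notMem (B := insert y B)
    (lt_of_lt_of_le (by grind) (hR _ (neighborFinset_mem_connectorSets hyu)))
  obtain ⟨z, hzR, hz, hzB⟩ := exists_mem_inter_notMem (B := insert x (insert y B))
    (lt_of_lt_of_le (by grind) (hR _ (neighborFinset_mem_connectorSets hyv)))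
  have hyx : (linkGraph H u).Adj y x := by simpa using hx
  have hyz : (linkGraph H v).Adj y z := by simpa using hz
  simp only [mem_insert, not_or] at hxB hzB
  refine ⟨![x, y, z], ?_, ?_, ?_, hyx.symm.2, ?_⟩
  · simp [Function.Injective, Fin.forall_fin_succ, hxB.1, Ne.symm hxB.1, hzB.1, Ne.symm hzB.1,
      hzB.2.1, Ne.symm hzB.2.1]
  · simp [Fin.forall_fin_succ, *]
  · simp [Fin.forall_fin_succ, *]
  · exact pair_comm v z ▸ insert_comm v y {z} ▸ hyz.2

lemma exists_connects {V : Type} [Fintype V] [DecidableEq V] {H : Finset (Finset V)} {c : ℝ}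
    {R : Finset V} {k : ℕ} (hR : ∀ S ∈ connectorSets H c, 5 * k ≤ #(R ∩ S)) {a b : Fin k → V}
    (hab : Function.Injective (fun p : Fin k × Fin 2 => ![a p.1, b p.1] p.2)) :
    ∃ x y z : Fin k → V, Connects H k a b x y z ∧ ∀ i, x i ∈ R ∧ y i ∈ R ∧ z i ∈ R := by
  let A : Finset V := univ.image fun p : Fin k × Fin 2 => ![a p.1, b p.1] p.2
  have hA : #A + Fintype.card (Fin 3) * k ≤ 5 * k := by
    have card_ends_le : #A ≤ k * 2 := card_image_le.trans_eq (by simp)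
    simp only [Fintype.card_fin]
    omega
  obtain ⟨w, w_inj, w_notMem, hw⟩ := exists_injective_uncurry_of_forall_exists hA fun i B hB =>
    exists_connecting_triple hR (a i) (b i) hB
  have ends_ne : ∀ i j s t, ![a i, b i] s ≠ w j t := fun i j s t hst =>
    w_notMem j t (hst ▸ mem_image_of_mem (fun p : Fin k × Fin 2 => ![a p.1, b p.1] p.2)
      (mem_univ (i, s)))
  refine ⟨(w · 0), (w · 1), (w · 2), ⟨?_, fun i => (hw i).2⟩, fun i =>
    ⟨(hw i).1 0, (hw i).1 1, (hw i).1 2⟩⟩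
  convert injective_append_of_injective hab w_inj ends_ne using 1
  ext ⟨i, t⟩
  fin_cases t <;> rfl

end Connecting

theorem reservoir_lemma_general {γ ρ : ℝ} (hγ : 0 < γ) (hρ0 : 0 < ρ) (hρ1 : ρ ≤ 1) :
    ∃ n₀ : ℕ, ∀ (V : Type) [Fintype V] [DecidableEq V], ∀ (H : Finset (Finset V)) (n : ℕ),
      Fintype.card V = n → n₀ < n →
      (∀ e ∈ H, #e = 3) →
      (∀ v : V, (1 / 4 + γ) * n.choose 2 ≤ (#{e ∈ H | v ∈ e} : ℝ)) →
      ∃ R : Finset V, #R ≤ ρ * n ∧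
        ∀ (k : ℕ) (a b : Fin k → V), k ≤ γ * ρ / 40 * n →
          Function.Injective (fun p : Fin k × Fin 2 => ![a p.1, b p.1] p.2) →
          ∃ x y z : Fin k → V, Connects H k a b x y z ∧
            ∀ i : Fin k, x i ∈ R ∧ y i ∈ R ∧ z i ∈ R := by
  have large := eventually_mul_pow_mul_exp_neg_add_exp_neg_lt_one
    (by positivity : 0 < γ / 2 * ρ / 16) (by positivity : 0 < ρ / 6) 2 2
  obtain ⟨n₀, hn₀⟩ := Filter.eventually_atTop.1 (large.and (Filter.eventually_gt_atTop 4))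
  refine ⟨n₀, fun V _ _ H n hV hn h3 hdeg => ?_⟩
  obtain ⟨hfew, hn4⟩ := hn₀ n hn.le
  have card_le : (#(connectorSets H (γ / 2 * n)) : ℝ) ≤ 2 * n ^ 2 := by
    exact_mod_cast hV ▸ card_connectorSets_le H _
  obtain ⟨R, hRn, hR⟩ := exists_card_le_and_le_card_inter (by positivity) hρ0.le hρ1 hV
    (fun S hS => le_card_of_mem_connectorSets hγ hV hn4 h3 hdeg hS)
    (lt_of_le_of_lt (by gcongr) hfew)
  refine ⟨R, hRn, fun k a b hk hab => exists_connects (c := γ / 2 * n) (fun S hS => ?_) hab⟩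
  have five_mul_le : (5 * k : ℝ) ≤ #(R ∩ S) := by linarith [hR S hS]
  exact_mod_cast five_mul_le

theorem reservoir_lemma (γ : ℝ) (hγ0 : 0 < γ) (hγ1 : γ < 1 / 4) :
    ∃ n₀ : ℕ, ∀ (V : Type) [Fintype V] [DecidableEq V], ∀ (H : Finset (Finset V)) (n : ℕ),
      Fintype.card V = n → n₀ < n →
      (∀ e ∈ H, e.card = 3) →
      (∀ v : V, (1 / 4 + γ) * (n.choose 2 : ℝ) ≤
        ((H.filter (fun e => v ∈ e)).card : ℝ)) →
      ∃ R : Finset V, (R.card : ℝ) ≤ γ * n ∧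
        ∀ (k : ℕ) (a b : Fin k → V), (k : ℝ) ≤ γ ^ 3 * n / 12 →
          Function.Injective (fun p : Fin k × Fin 2 => ![a p.1, b p.1] p.2) →
          ∃ x y z : Fin k → V, Connects H k a b x y z ∧
            ∀ i : Fin k, x i ∈ R ∧ y i ∈ R ∧ z i ∈ R := by
  obtain ⟨n₀, h⟩ := reservoir_lemma_general hγ0 hγ0 (by linarith)
  refine ⟨n₀, fun V _ _ H n hV hn h3 hdeg => ?_⟩
  obtain ⟨R, hRn, hR⟩ := h V H n hV hn h3 hdeg
  exact ⟨R, hRn, fun k a b hk hab => hR k a b (hk.trans (by nlinarith [pow_pos hγ0 2])) hab⟩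
end

section
/- For all γ > 0 and α > 0 there exist integers p and n₀ such that for n > n₀ the following holds. Suppose H is a 3-uniform hypergraph on n vertices with δ₁(H) ≥ (7/16 + γ)·C(n,2). Then there is a family of at most p pairwise vertex-disjoint loose paths in H which covers all but at most αn vertices of H. -/
open Finset

/-- `f` describes a loose path with `k ≥ 1` edges in the `3`-uniform hypergraph `H`:
the vertices `f 0, f 1, …, f (2k)` are distinct, and for every `i < k` the triple
`{f (2i), f (2i+1), f (2i+2)}` is an edge of `H`. -/
def IsLoosePath {V : Type} [DecidableEq V] (H : Finset (Finset V)) (k : ℕ) (f : ℕ → V) :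
    Prop :=
  1 ≤ k ∧
  (∀ i ≤ 2 * k, ∀ j ≤ 2 * k, f i = f j → i = j) ∧
  ∀ i < k, ({f (2 * i), f (2 * i + 1), f (2 * i + 2)} : Finset V) ∈ H

/-- The vertex set of the loose path described by `f` with `k` edges. -/
def pathVerts {V : Type} [DecidableEq V] (k : ℕ) (f : ℕ → V) : Finset V :=
  (Finset.range (2 * k + 1)).image f

/-!
Paths are grown inside regular cells, and the number `7 / 16` enters through a linear programming
problem on the reduced structure.

An energy increment argument splits the vertices into boundedly many colour classes such that almost
all ordered triples of vertices lie in lower regular cells. A dense lower regular cell with colours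
`(i, j, k)` still has many edges after a large part of its classes is removed, so it contains a long
loose path whose joints alternate between `i` and `j` and whose other vertices have colour `k`. Such
a path uses the classes `i`, `j`, `k` in proportion `1 : 1 : 2`. Packing these paths greedily turns
a fractional tiling of the colour classes with this load into a family of vertex-disjoint paths of
equal, linear length, hence of bounded size.

An almost perfect fractional tiling exists by duality. Suppose that a dual solution `y`, normalised
to have average less than `1` and `y i + y j + 2 * y k ≥ 4` on all usable triples, attains its
minimum at `k`. Subtracting that minimum and rescaling gives `z ≥ 0` of average at most `1` such
that `z i + z j ≥ 4` for every pair `(i, j)` completed by `k`. By averaging the tails of `z` over a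
threshold `s`, at most `7 / 16` of all pairs can satisfy this (with equality when a quarter of the
weight has `z = 4`), contradicting the degree condition.
-/

open scoped BigOperators

section CellMean

variable {Ω κ κ' : Type*} [Fintype Ω] [DecidableEq κ] [DecidableEq κ']

/-- The mean of `f` over the cell of colour `k` of the colouring `C`; it is `0` when the cell is
empty. As a function of `C w` it is the conditional expectation of `f` given the colour. -/
noncomputable def cellMean (f : Ω → ℝ) (C : Ω → κ) (k : κ) : ℝ := 𝔼 w with C w = k, f w

/-- The energy of a colouring in the sense of regularity lemmas, without normalisation: the squared
`L²`-norm of the conditional expectation of `f`. -/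
noncomputable def energy (f : Ω → ℝ) (C : Ω → κ) : ℝ := ∑ w, cellMean f C (C w) ^ 2

lemma card_mul_cellMean (f : Ω → ℝ) (C : Ω → κ) (k : κ) :
    #{w | C w = k} * cellMean f C k = ∑ w with C w = k, f w :=
  card_mul_expect _ _

lemma cellMean_nonneg {f : Ω → ℝ} (hf : ∀ w, 0 ≤ f w) (C : Ω → κ) (k : κ) : 0 ≤ cellMean f C k :=
  expect_nonneg fun w _ => hf w

lemma cellMean_le_one {f : Ω → ℝ} (hf : ∀ w, f w ≤ 1) (C : Ω → κ) (k : κ) :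
    cellMean f C k ≤ 1 := by
  rcases eq_empty_or_nonempty ({w | C w = k} : Finset Ω) with h | h
  · simp [cellMean, h]
  · exact expect_le h fun w _ => hf w

lemma energy_nonneg (f : Ω → ℝ) (C : Ω → κ) : 0 ≤ energy f C := sum_nonneg fun _ _ => sq_nonneg _

lemma energy_le_card {f : Ω → ℝ} (hf₀ : ∀ w, 0 ≤ f w) (hf₁ : ∀ w, f w ≤ 1) (C : Ω → κ) :
    energy f C ≤ Fintype.card Ω :=
  calc energy f C ≤ ∑ _w : Ω, (1 : ℝ) := sum_le_sum fun w _ =>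
        pow_le_one₀ (cellMean_nonneg hf₀ C _) (cellMean_le_one hf₁ C _)
    _ = Fintype.card Ω := by simp

lemma sum_cellMean_mul (f : Ω → ℝ) (C : Ω → κ) (g : κ → ℝ) :
    ∑ w, cellMean f C (C w) * g (C w) = ∑ w, f w * g (C w) := by
  have hC : ∀ w ∈ univ, C w ∈ univ.image C := fun w hw => mem_image_of_mem C hw
  rw [← sum_fiberwise_of_maps_to hC, ← sum_fiberwise_of_maps_to hC (fun w => f w * g (C w))]
  refine sum_congr rfl fun k _ => ?_
  calc ∑ w with C w = k, cellMean f C (C w) * g (C w)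
      = ∑ w with C w = k, cellMean f C k * g k :=
        sum_congr rfl fun w hw => by rw [(mem_filter.1 hw).2]
    _ = ∑ w with C w = k, f w * g k := by
        rw [sum_const, nsmul_eq_mul, ← mul_assoc, card_mul_cellMean, sum_mul]
    _ = ∑ w with C w = k, f w * g (C w) :=
        sum_congr rfl fun w hw => by rw [(mem_filter.1 hw).2]

lemma sum_cellMean_of_saturated (f : Ω → ℝ) (C : Ω → κ) {S : Finset Ω}
    (hS : ∀ w x, C w = C x → x ∈ S → w ∈ S) :
    ∑ w ∈ S, cellMean f C (C w) = ∑ w ∈ S, f w := by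
  classical
  have hmem (w : Ω) : C w ∈ S.image C ↔ w ∈ S :=
    ⟨fun h => let ⟨x, hx, hxw⟩ := mem_image.1 h; hS w x hxw.symm hx, mem_image_of_mem C⟩
  simpa [hmem, sum_ite_mem] using sum_cellMean_mul f C fun k => if k ∈ S.image C then 1 else 0

lemma sum_filter_cellMean_lt_le (f : Ω → ℝ) (C : Ω → κ) {s : ℝ} (hs : 0 ≤ s) :
    ∑ w with cellMean f C (C w) < s, f w ≤ s * Fintype.card Ω :=
  calc ∑ w with cellMean f C (C w) < s, f w = ∑ w with cellMean f C (C w) < s, cellMean f C (C w) :=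
        (sum_cellMean_of_saturated f C fun w x hwx hx => by simpa [hwx] using hx).symm
    _ ≤ #{w | cellMean f C (C w) < s} • s := sum_le_card_nsmul _ _ _ fun w hw =>
        (mem_filter.1 hw).2.le
    _ ≤ s * Fintype.card Ω := by
        rw [nsmul_eq_mul, mul_comm]
        gcongr
        exact card_le_univ _

lemma energy_eq_add_of_refines (f : Ω → ℝ) {C : Ω → κ} {C' : Ω → κ'} (π : κ' → κ)
    (hπ : ∀ w, π (C' w) = C w) :
    energy f C' = energy f C + ∑ w, (cellMean f C' (C' w) - cellMean f C (C w)) ^ 2 := by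
  have horth : ∑ w, cellMean f C' (C' w) * cellMean f C (C w) = energy f C := by
    have hfine := sum_cellMean_mul f C' fun k => cellMean f C (π k)
    have hcoarse := sum_cellMean_mul f C (cellMean f C)
    simp only [hπ] at hfine
    rw [hfine, ← hcoarse, energy]
    simp only [sq]
  simp only [sub_sq, sum_add_distrib, sum_sub_distrib, mul_assoc, ← mul_sum, horth]
  simp only [energy]
  ring

lemma sq_mul_card_le_sum_cellMean_sub_sq {f : Ω → ℝ} {C : Ω → κ} {C' : Ω → κ'} {S : Finset Ω}
    {k : κ} {ε : ℝ} (hε : 0 ≤ ε) (hSk : ∀ w ∈ S, C w = k)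
    (hS : ∀ w x, C' w = C' x → x ∈ S → w ∈ S)
    (hlow : ∑ w ∈ S, f w ≤ (cellMean f C k - ε) * #S) :
    ε ^ 2 * #S ≤ ∑ w ∈ S, (cellMean f C' (C' w) - cellMean f C (C w)) ^ 2 := by
  rcases S.eq_empty_or_nonempty with rfl | hne
  · simp
  have hcoarse : ∑ w ∈ S, cellMean f C (C w) = cellMean f C k * #S := by
    rw [sum_congr rfl fun w hw => by rw [hSk w hw], sum_const, nsmul_eq_mul, mul_comm]
  have hdrop : ε * #S ≤ -∑ w ∈ S, (cellMean f C' (C' w) - cellMean f C (C w)) := by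
    rw [sum_sub_distrib, sum_cellMean_of_saturated f C' hS, hcoarse]
    linarith
  have hcard : (0 : ℝ) < #S := by exact_mod_cast hne.card_pos
  refine le_of_mul_le_mul_left ?_ hcard
  calc (#S : ℝ) * (ε ^ 2 * #S) = (ε * #S) ^ 2 := by ring
    _ ≤ (-∑ w ∈ S, (cellMean f C' (C' w) - cellMean f C (C w))) ^ 2 := by gcongr
    _ = (∑ w ∈ S, (cellMean f C' (C' w) - cellMean f C (C w))) ^ 2 := neg_sq _
    _ ≤ _ := sq_sum_le_card_mul_sum_sq

end CellMean

section Regularity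

variable {V ι : Type*}

/-- The colouring of the ordered triples of vertices induced by a vertex colouring. -/
def tripleColor (c : V → ι) (w : V × V × V) : ι × ι × ι := (c w.1, c w.2.1, c w.2.2)

/-- `X` is a subset of `A` containing at least the proportion `ε` of its elements. -/
def IsLargeSubset (ε : ℝ) (X A : Finset V) : Prop := X ⊆ A ∧ ε * #A ≤ #X

/-- The refinement of a colouring by a family of vertex sets: the new colour of `v` records which of
these sets contain `v`. -/
def refineBy {J : Type*} (c : V → ι) (S : J → Finset V) (v : V) : ι × Set J := (c v, {j | v ∈ S j})

lemma mem_iff_mem_of_refineBy_eq {J : Type*} {c : V → ι} {S : J → Finset V} {v w : V}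
    (h : refineBy c S v = refineBy c S w) (j : J) : v ∈ S j ↔ w ∈ S j :=
  Set.ext_iff.1 (Prod.ext_iff.1 h).2 j

variable [Fintype V] [DecidableEq ι]

/-- The set of vertices of colour `i`. -/
def colorClass (c : V → ι) (i : ι) : Finset V := {v | c v = i}

/-- The cell of a triple of colours: the ordered triples of vertices with these colours. -/
def colorBox (c : V → ι) (t : ι × ι × ι) : Finset (V × V × V) :=
  colorClass c t.1 ×ˢ colorClass c t.2.1 ×ˢ colorClass c t.2.2

/-- The one-sided regularity of a cell: no large sub-box has density more than `ε` below the density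
of the whole cell. -/
def IsLowerRegular (ε : ℝ) (f : V × V × V → ℝ) (c : V → ι) (t : ι × ι × ι) : Prop :=
  ∀ X Y Z : Finset V, IsLargeSubset ε X (colorClass c t.1) →
    IsLargeSubset ε Y (colorClass c t.2.1) → IsLargeSubset ε Z (colorClass c t.2.2) →
    (cellMean f (tripleColor c) t - ε) * #(X ×ˢ Y ×ˢ Z) ≤ ∑ w ∈ X ×ˢ Y ×ˢ Z, f w

lemma mem_colorClass {c : V → ι} {i : ι} {v : V} : v ∈ colorClass c i ↔ c v = i := by
  simp [colorClass]

lemma mem_colorBox {c : V → ι} {t : ι × ι × ι} {w : V × V × V} :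
    w ∈ colorBox c t ↔ tripleColor c w = t := by
  simp [tripleColor, colorBox, mem_colorClass, Prod.ext_iff]

lemma filter_tripleColor_eq_colorBox (c : V → ι) (t : ι × ι × ι) :
    ({w | tripleColor c w = t} : Finset (V × V × V)) = colorBox c t := by
  ext w
  simp [mem_colorBox]

lemma card_colorBox (c : V → ι) (t : ι × ι × ι) :
    #(colorBox c t) = #(colorClass c t.1) * (#(colorClass c t.2.1) * #(colorClass c t.2.2)) := by
  simp only [colorBox, card_product]

lemma pow_five_mul_card_colorBox_le {κ : Type*} [DecidableEq κ] {f : V × V × V → ℝ} {c : V → ι}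
    {c' : V → κ} {t : ι × ι × ι} {ε : ℝ} (hε : 0 ≤ ε) {X Y Z : Finset V}
    (hX : IsLargeSubset ε X (colorClass c t.1)) (hY : IsLargeSubset ε Y (colorClass c t.2.1))
    (hZ : IsLargeSubset ε Z (colorClass c t.2.2))
    (hlow : ∑ w ∈ X ×ˢ Y ×ˢ Z, f w ≤ (cellMean f (tripleColor c) t - ε) * #(X ×ˢ Y ×ˢ Z))
    (hX' : ∀ v w, c' v = c' w → w ∈ X → v ∈ X) (hY' : ∀ v w, c' v = c' w → w ∈ Y → v ∈ Y)
    (hZ' : ∀ v w, c' v = c' w → w ∈ Z → v ∈ Z) :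
    ε ^ 5 * #(colorBox c t) ≤ ∑ w ∈ colorBox c t,
      (cellMean f (tripleColor c') (tripleColor c' w) -
        cellMean f (tripleColor c) (tripleColor c w)) ^ 2 := by
  have hsub : X ×ˢ Y ×ˢ Z ⊆ colorBox c t := product_subset_product hX.1
    (product_subset_product hY.1 hZ.1)
  have hcard : ε ^ 3 * #(colorBox c t) ≤ #(X ×ˢ Y ×ˢ Z) :=
    calc ε ^ 3 * (#(colorBox c t) : ℝ)
        = (ε * #(colorClass c t.1)) * ((ε * #(colorClass c t.2.1)) *
            (ε * #(colorClass c t.2.2))) := by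
          rw [card_colorBox]
          push_cast
          ring
      _ ≤ #X * (#Y * #Z) := by gcongr; exacts [hX.2, hY.2, hZ.2]
      _ = #(X ×ˢ Y ×ˢ Z) := by simp only [card_product, Nat.cast_mul]
  calc ε ^ 5 * (#(colorBox c t) : ℝ) = ε ^ 2 * (ε ^ 3 * #(colorBox c t)) := by ring
    _ ≤ ε ^ 2 * #(X ×ˢ Y ×ˢ Z) := by gcongr
    _ ≤ ∑ w ∈ X ×ˢ Y ×ˢ Z, _ := sq_mul_card_le_sum_cellMean_sub_sq hε
        (fun w hw => mem_colorBox.1 (hsub hw))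
        (fun w x hwx hx => by
          simp only [tripleColor, Prod.mk.injEq] at hwx
          simp only [mem_product] at hx ⊢
          exact ⟨hX' _ _ hwx.1 hx.1, hY' _ _ hwx.2.1 hx.2.1, hZ' _ _ hwx.2.2 hx.2.2⟩) hlow
    _ ≤ ∑ w ∈ colorBox c t, _ := sum_le_sum_of_subset_of_nonneg hsub fun _ _ _ => sq_nonneg _

lemma exists_of_not_isLowerRegular {f : V × V × V → ℝ} {c : V → ι} {ε : ℝ} {t : ι × ι × ι}
    (ht : ¬IsLowerRegular ε f c t) : ∃ W : Fin 3 → Finset V,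
      IsLargeSubset ε (W 0) (colorClass c t.1) ∧ IsLargeSubset ε (W 1) (colorClass c t.2.1) ∧
        IsLargeSubset ε (W 2) (colorClass c t.2.2) ∧ ∑ w ∈ W 0 ×ˢ W 1 ×ˢ W 2, f w <
          (cellMean f (tripleColor c) t - ε) * #(W 0 ×ˢ W 1 ×ˢ W 2) := by
  simp only [IsLowerRegular, not_forall, not_le] at ht
  obtain ⟨X, Y, Z, hX, hY, hZ, hlow⟩ := ht
  exact ⟨![X, Y, Z], hX, hY, hZ, hlow⟩

open scoped Classical in
lemma exists_energy_add_le [Finite ι] {f : V × V × V → ℝ} {c : V → ι} {ε : ℝ} (hε : 0 ≤ ε)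
    (hirr : ε * Fintype.card V ^ 3 ≤ #{w | ¬IsLowerRegular ε f c (tripleColor c w)}) :
    ∃ c' : V → ι × Set ((ι × ι × ι) × Fin 3),
      energy f (tripleColor c) + ε ^ 6 * Fintype.card V ^ 3 ≤ energy f (tripleColor c') := by
  cases nonempty_fintype ι
  choose! W hW using fun t (ht : ¬IsLowerRegular ε f c t) => exists_of_not_isLowerRegular ht
  set c' := refineBy c fun j : (ι × ι × ι) × Fin 3 => W j.1 j.2
  set gain : V × V × V → ℝ := fun w => (cellMean f (tripleColor c') (tripleColor c' w) -
    cellMean f (tripleColor c) (tripleColor c w)) ^ 2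
  have hgain (t : ι × ι × ι) (ht : ¬IsLowerRegular ε f c t) :
      ε ^ 5 * #(colorBox c t) ≤ ∑ w ∈ colorBox c t, gain w := by
    obtain ⟨hX, hY, hZ, hlow⟩ := hW t ht
    exact pow_five_mul_card_colorBox_le hε hX hY hZ hlow.le
      (fun _ _ h => (mem_iff_mem_of_refineBy_eq h (t, 0)).2)
      (fun _ _ h => (mem_iff_mem_of_refineBy_eq h (t, 1)).2)
      fun _ _ h => (mem_iff_mem_of_refineBy_eq h (t, 2)).2
  let bad : Finset (ι × ι × ι) := {t | ¬IsLowerRegular ε f c t}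
  refine ⟨c', ?_⟩
  rw [energy_eq_add_of_refines f (C := tripleColor c) (C' := tripleColor c') (tripleColor Prod.fst)
    fun _ => rfl]
  gcongr
  calc ε ^ 6 * (Fintype.card V : ℝ) ^ 3 = ε ^ 5 * (ε * Fintype.card V ^ 3) := by ring
    _ ≤ ε ^ 5 * #{w | tripleColor c w ∈ bad} := by gcongr; simpa [bad] using hirr
    _ = ∑ t ∈ bad, ε ^ 5 * #(colorBox c t) := by
        rw [← mul_sum, ← sum_card_fiberwise_eq_card_filter, Nat.cast_sum]
        simp only [filter_tripleColor_eq_colorBox]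
    _ ≤ ∑ t ∈ bad, ∑ w ∈ colorBox c t, gain w :=
        sum_le_sum fun t ht => hgain t (mem_filter.1 ht).2
    _ ≤ ∑ t, ∑ w ∈ colorBox c t, gain w := sum_le_univ_sum_of_nonneg fun t =>
        sum_nonneg fun w _ => sq_nonneg _
    _ = ∑ w, gain w := by
        simp only [← filter_tripleColor_eq_colorBox, sum_fiberwise]

/-- A bound for the number of colours after `s` refinement steps of the regularity lemma. -/
def regularityBound : ℕ → ℕ
  | 0 => 1
  | s + 1 => regularityBound s * 2 ^ (regularityBound s ^ 3 * 3)

lemma regularityBound_mono : Monotone regularityBound :=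
  monotone_nat_of_le_succ fun s => Nat.le_mul_of_pos_right _ (by positivity)

end Regularity

open scoped Classical in
lemma exists_lowerRegular_or_le_energy {V : Type*} [Fintype V] (f : V × V × V → ℝ) {ε : ℝ}
    (hε : 0 ≤ ε) (s : ℕ) :
    ∃ (ι : Type) (_ : Fintype ι) (_ : DecidableEq ι) (c : V → ι),
      Fintype.card ι ≤ regularityBound s ∧
      (#{w | ¬IsLowerRegular ε f c (tripleColor c w)} ≤ ε * Fintype.card V ^ 3 ∨
        s * (ε ^ 6 * Fintype.card V ^ 3) ≤ energy f (tripleColor c)) := by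
  induction s with
  | zero =>
    refine ⟨Unit, inferInstance, inferInstance, fun _ => (), by simp [regularityBound], Or.inr ?_⟩
    simpa using energy_nonneg f _
  | succ s ih =>
    obtain ⟨ι, _, _, c, hcard, hc⟩ := ih
    by_cases hreg : #{w | ¬IsLowerRegular ε f c (tripleColor c w)} ≤ ε * Fintype.card V ^ 3
    · exact ⟨ι, inferInstance, inferInstance, c, hcard.trans (regularityBound_mono s.le_succ),
        Or.inl hreg⟩
    obtain ⟨c', hc'⟩ := exists_energy_add_le hε (not_le.1 hreg).le
    refine ⟨_, inferInstance, inferInstance, c', ?_, Or.inr ?_⟩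
    · simp only [Fintype.card_prod, Fintype.card_set, Fintype.card_fin, regularityBound]
      calc Fintype.card ι * 2 ^ (Fintype.card ι * (Fintype.card ι * Fintype.card ι) * 3)
          = Fintype.card ι * 2 ^ (Fintype.card ι ^ 3 * 3) := by ring
        _ ≤ _ := by gcongr; norm_num
    · have hs := hc.resolve_left hreg
      push_cast
      linarith

open scoped Classical in
theorem exists_lowerRegular_coloring {ε : ℝ} (hε : 0 < ε) :
    ∃ T : ℕ, ∀ (V : Type*) [Fintype V] [Nonempty V] (f : V × V × V → ℝ),
      (∀ w, 0 ≤ f w) → (∀ w, f w ≤ 1) →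
      ∃ (ι : Type) (_ : Fintype ι) (_ : DecidableEq ι) (c : V → ι), Fintype.card ι ≤ T ∧
        #{w | ¬IsLowerRegular ε f c (tripleColor c w)} ≤ ε * Fintype.card V ^ 3 := by
  obtain ⟨s, hs⟩ := exists_nat_gt (1 / ε ^ 6)
  refine ⟨regularityBound s, fun V _ _ f hf₀ hf₁ => ?_⟩
  obtain ⟨ι, _, _, c, hcard, hreg | henergy⟩ := exists_lowerRegular_or_le_energy f hε.le s
  · exact ⟨ι, inferInstance, inferInstance, c, hcard, hreg⟩
  have hle := henergy.trans (energy_le_card hf₀ hf₁ (tripleColor c))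
  have hV : (0 : ℝ) < Fintype.card V := by exact_mod_cast Fintype.card_pos
  rw [div_lt_iff₀ (by positivity)] at hs
  have hlt : (Fintype.card V : ℝ) ^ 3 < s * (ε ^ 6 * Fintype.card V ^ 3) := by
    rw [← mul_assoc]
    exact lt_mul_of_one_lt_left (by positivity) hs
  simp only [Fintype.card_prod] at hle
  push_cast at hle
  linarith

section TailBound

variable {ι : Type*} [Fintype ι] {m z : ι → ℝ}

/-- The total weight of the indices at which `z` is at least `s`. -/
noncomputable def tailWeight (m z : ι → ℝ) (s : ℝ) : ℝ := ∑ i with s ≤ z i, m i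

lemma tailWeight_antitone (hm : ∀ i, 0 ≤ m i) : Antitone (tailWeight m z) := fun _ _ hst =>
  sum_le_sum_of_subset_of_nonneg (monotone_filter_right _ fun _ _ h => hst.trans h)
    fun i _ _ => hm i

lemma integral_tailWeight_le (hm : ∀ i, 0 ≤ m i) (hz : ∀ i, 0 ≤ z i) {b : ℝ} (hb : 0 ≤ b) :
    ∫ s in (0 : ℝ)..b, tailWeight m z s ≤ ∑ i, m i * z i := by
  have hterm (i : ι) : Antitone fun s : ℝ => if s ≤ z i then m i else 0 := fun s t hst => by
    dsimp only
    split_ifs with ht hs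
    exacts [le_rfl, absurd (hst.trans ht) hs, hm i, le_rfl]
  simp only [tailWeight, sum_filter]
  rw [intervalIntegral.integral_finsetSum fun i _ => (hterm i).intervalIntegrable]
  refine sum_le_sum fun i _ => ?_
  have hind (s : ℝ) :
      (if s ≤ z i then m i else 0) = (Set.Iic (z i)).indicator (fun _ => m i) s := rfl
  simp only [hind]
  rw [intervalIntegral.integral_of_le hb,
    MeasureTheory.setIntegral_indicator measurableSet_Iic, Set.Ioc_inter_Iic,
    MeasureTheory.setIntegral_const, smul_eq_mul, mul_comm, Real.volume_real_Ioc, sub_zero]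
  exact mul_le_mul_of_nonneg_left (max_le (min_le_right _ _) (hz i)) (hm i)

lemma exists_tailWeight_add_tailWeight_le (hm : ∀ i, 0 ≤ m i) (hz : ∀ i, 0 ≤ z i)
    (hmz : ∑ i, m i * z i ≤ ∑ i, m i) :
    ∃ s ∈ Set.Icc (0 : ℝ) 2, tailWeight m z s + tailWeight m z (4 - s) ≤ (∑ i, m i) / 2 := by
  have hint {a b : ℝ} : IntervalIntegrable (tailWeight m z) MeasureTheory.volume a b :=
    (tailWeight_antitone hm).intervalIntegrable
  have hint' : IntervalIntegrable (fun s => tailWeight m z (4 - s)) MeasureTheory.volume 0 2 :=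
    ((tailWeight_antitone hm).comp fun _ _ h => sub_le_sub_left h 4).intervalIntegrable
  obtain ⟨s, hs, hle⟩ := MeasureTheory.exists_le_setAverage (s := Set.Ioc (0 : ℝ) 2) (by simp)
    (by simp) (hint.add hint').1
  refine ⟨s, Set.Ioc_subset_Icc_self hs, hle.trans ?_⟩
  have hfold : ∫ s in (0 : ℝ)..2, (tailWeight m z s + tailWeight m z (4 - s)) =
      ∫ s in (0 : ℝ)..4, tailWeight m z s := by
    rw [intervalIntegral.integral_add hint hint', intervalIntegral.integral_comp_sub_left]
    norm_num [intervalIntegral.integral_add_adjacent_intervals hint hint]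
  rw [MeasureTheory.setAverage_eq, ← intervalIntegral.integral_of_le zero_le_two, hfold]
  have := (integral_tailWeight_le hm hz zero_le_four).trans hmz
  norm_num
  linarith

/-- A pair whose entries add up to at least `4` either meets the tail above `4 - s` or lies in the
square of the window `[s, 4 - s)`, for each `s ≤ 2`. -/
theorem sum_mul_le_of_four_le_add (hm : ∀ i, 0 ≤ m i) (hz : ∀ i, 0 ≤ z i)
    (hmz : ∑ i, m i * z i ≤ ∑ i, m i) {P : Finset (ι × ι)} (hP : ∀ p ∈ P, 4 ≤ z p.1 + z p.2) :
    ∑ p ∈ P, m p.1 * m p.2 ≤ 7 / 16 * (∑ i, m i) ^ 2 := by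
  classical
  obtain ⟨s, hs, hsum⟩ := exists_tailWeight_add_tailWeight_le hm hz hmz
  set M := ∑ i, m i
  set a := tailWeight m z (4 - s) with ha
  set b := tailWeight m z s
  have hab : a ≤ b := tailWeight_antitone hm (by linarith [hs.2])
  have ha₀ : 0 ≤ a := sum_nonneg fun i _ => hm i
  let A : Finset ι := {i | 4 - s ≤ z i}
  let B : Finset ι := {i | s ≤ z i}
  have hAB : A ⊆ B := monotone_filter_right _ fun i _ h => le_trans (by linarith [hs.2]) h
  have hAc : ∑ i ∈ Aᶜ, m i = M - a := eq_sub_of_add_eq (sum_compl_add_sum A m)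
  have hBA : ∑ i ∈ B \ A, m i = b - a := eq_sub_of_add_eq (sum_sdiff hAB)
  have hsub : P ⊆ A ×ˢ univ ∪ (Aᶜ ×ˢ A ∪ (B \ A) ×ˢ (B \ A)) := fun p hp => by
    have := hP p hp
    simp only [A, B, mem_union, mem_product, mem_sdiff, mem_compl, mem_filter_univ, mem_univ]
    grind
  have hprod (S T : Finset ι) :
      ∑ p ∈ S ×ˢ T, m p.1 * m p.2 = (∑ i ∈ S, m i) * ∑ j ∈ T, m j := by
    rw [sum_mul_sum, sum_product]
  have hdisj : Disjoint (A ×ˢ univ) (Aᶜ ×ˢ A ∪ (B \ A) ×ˢ (B \ A)) := disjoint_union_right.2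
    ⟨disjoint_product.2 (.inl disjoint_compl_right), disjoint_product.2 (.inl disjoint_sdiff)⟩
  have hdisj' : Disjoint (Aᶜ ×ˢ A) ((B \ A) ×ˢ (B \ A)) :=
    disjoint_product.2 (.inr disjoint_sdiff)
  calc ∑ p ∈ P, m p.1 * m p.2
      ≤ ∑ p ∈ A ×ˢ univ ∪ (Aᶜ ×ˢ A ∪ (B \ A) ×ˢ (B \ A)), m p.1 * m p.2 :=
        sum_le_sum_of_subset_of_nonneg hsub fun p _ _ => mul_nonneg (hm _) (hm _)
    _ = a * M + ((M - a) * a + (b - a) * (b - a)) := by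
        rw [sum_union hdisj, sum_union hdisj', hprod, hprod, hprod, hAc, hBA, ha, tailWeight]
    _ ≤ a * M + ((M - a) * a + (M / 2 - a - a) * (M / 2 - a - a)) := by
        gcongr <;> linarith
    _ = M ^ 2 / 4 + 3 * a ^ 2 := by ring
    _ ≤ M ^ 2 / 4 + 3 * (M / 4) ^ 2 := by
        gcongr
        linarith
    _ = 7 / 16 * M ^ 2 := by ring

end TailBound

lemma exists_mem_stdSimplex_sum_smul_eq {J ι : Type*} [Fintype J] [Fintype ι] (g : J → ι → ℝ)
    (x : ι → ℝ)
    (hdual : ∀ (y : ι → ℝ) (u : ℝ), (∀ j, u < ∑ l, g j l * y l) → u ≤ ∑ l, x l * y l) :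
    ∃ w ∈ stdSimplex ℝ J, ∑ j, w j • g j = x := by
  classical
  let Λ := Fintype.linearCombination ℝ g
  suffices hmem : x ∈ Λ '' stdSimplex ℝ J by
    obtain ⟨w, hw, hwx⟩ := hmem
    exact ⟨w, hw, by rwa [Fintype.linearCombination_apply] at hwx⟩
  by_contra hx
  obtain ⟨φ, u, hφx, hφ⟩ := geometric_hahn_banach_point_closed
    ((convex_stdSimplex ℝ J).linear_image Λ)
    ((isCompact_stdSimplex ℝ J).image (LinearMap.continuous_on_pi Λ)).isClosed hx
  have hsum (v : ι → ℝ) : ∑ l, v l * φ (Pi.single l 1) = φ v := by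
    conv_rhs => rw [pi_eq_sum_univ' v]
    simp only [map_sum, map_smul, smul_eq_mul]
  have hux := hdual (fun l => φ (Pi.single l 1)) u fun j => by
    rw [hsum]
    exact hφ _ ⟨Pi.single j 1, single_mem_stdSimplex ℝ j, by simp [Λ]⟩
  rw [hsum] at hux
  exact hφx.not_ge hux

section FractionalTiling

variable {ι : Type*} [DecidableEq ι]

/-- Up to boundary effects, the number of vertices of colour `l` per two edges of a loose path in
which the vertices joining consecutive edges have colours `t.1` and `t.2.1` in turn and the others
have colour `t.2.2`. -/
def pathLoad (t : ι × ι × ι) (l : ι) : ℝ :=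
  (if t.1 = l then 1 else 0) + (if t.2.1 = l then 1 else 0) + 2 * (if t.2.2 = l then 1 else 0)

lemma pathLoad_nonneg (t : ι × ι × ι) (l : ι) : 0 ≤ pathLoad t l := by
  unfold pathLoad
  positivity

lemma sum_pathLoad_mul [Fintype ι] (t : ι × ι × ι) (y : ι → ℝ) :
    ∑ l, pathLoad t l * y l = y t.1 + y t.2.1 + 2 * y t.2.2 := by
  simp [pathLoad, add_mul, sum_add_distrib]

variable [Fintype ι]

/-- A fractional tiling of the weighted vertex set `(ι, m)` by the paths running through the triples
in `R`. -/
structure IsFracPathTiling (R : Finset (ι × ι × ι)) (m : ι → ℝ) (h : R → ℝ) : Prop where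
  nonneg : ∀ t, 0 ≤ h t
  load_le : ∀ l, ∑ t, h t * pathLoad t.1 l ≤ m l

variable {m : ι → ℝ} {R : Finset (ι × ι × ι)} {B : Finset ι}

/-- Weak duality for the fractional tiling problem. If `y` violates it and is minimal at `k`, then
every pair that `k` completes to a triple of `R` has a large excess of `y` over `y k`. -/
lemma le_sum_mul_of_forall_lt [Nonempty ι] (hm : ∀ i, 0 ≤ m i)
    (hR : ∀ k ∉ B, 7 / 16 * (∑ i, m i) ^ 2 <
      ∑ p : ι × ι with (p.1, p.2, k) ∈ R, m p.1 * m p.2)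
    {y : ι → ℝ} {u : ℝ} (hB : ∀ k ∈ B, u < (∑ i, m i) * y k)
    (hRy : ∀ t ∈ R, u < (∑ i, m i) / 4 * (y t.1 + y t.2.1 + 2 * y t.2.2)) :
    u ≤ ∑ l, m l * y l := by
  by_contra! hu
  obtain ⟨k, hk⟩ := Finite.exists_min y
  set M := ∑ i, m i with hM
  have hexcess : ∑ i, m i * (y i - y k) = ∑ i, m i * y i - M * y k := by
    simp only [mul_sub, sum_sub_distrib, ← sum_mul, hM]
  have hnonneg : 0 ≤ ∑ i, m i * (y i - y k) :=
    sum_nonneg fun i _ => mul_nonneg (hm i) (sub_nonneg.2 (hk i))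
  have hpos : 0 < u - M * y k := by linarith
  have hkB : k ∉ B := fun h => by linarith [hB k h]
  have hM₀ : 0 ≤ M := sum_nonneg fun i _ => hm i
  let z (i : ι) : ℝ := M * (y i - y k) / (u - M * y k)
  have hz (i : ι) : 0 ≤ z i := div_nonneg (mul_nonneg hM₀ (sub_nonneg.2 (hk i))) hpos.le
  have hmz : ∑ i, m i * z i ≤ M := by
    have hsum : ∑ i, m i * z i = M * ((∑ i, m i * (y i - y k)) / (u - M * y k)) := by
      rw [sum_div, mul_sum]
      exact sum_congr rfl fun i _ => by ring
    rw [hsum]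
    exact mul_le_of_le_one_right hM₀ ((div_le_one hpos).2 (by linarith))
  refine (hR k hkB).not_ge (sum_mul_le_of_four_le_add hm hz hmz fun p hp => ?_)
  have hp' := hRy _ (mem_filter.1 hp).2
  rw [← add_div, le_div_iff₀ hpos]
  linarith

theorem exists_isFracPathTiling [Nonempty ι] (hm : ∀ i, 0 ≤ m i)
    (hR : ∀ k ∉ B, 7 / 16 * (∑ i, m i) ^ 2 <
      ∑ p : ι × ι with (p.1, p.2, k) ∈ R, m p.1 * m p.2) :
    ∃ h : R → ℝ, IsFracPathTiling R m h ∧ ∑ i, m i - ∑ k ∈ B, m k ≤ 4 * ∑ t, h t := by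
  set M := ∑ i, m i
  have hM₀ : 0 ≤ M := sum_nonneg fun i _ => hm i
  let g : R ⊕ B → ι → ℝ := Sum.elim
    (fun t l => M / 4 * pathLoad t.1 l) fun k l => if l = k.1 then M else 0
  obtain ⟨w, ⟨hw₀, hw₁⟩, hw⟩ := exists_mem_stdSimplex_sum_smul_eq g m fun y u hu =>
    le_sum_mul_of_forall_lt hm hR (B := B)
      (fun k hk => by simpa [g] using hu (.inr ⟨k, hk⟩))
      fun t ht => by
        simpa only [g, Sum.elim_inl, mul_assoc, ← mul_sum, sum_pathLoad_mul] using hu (.inl ⟨t, ht⟩)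
  have hcoord (l : ι) : ∑ t, w (.inl t) * (M / 4) * pathLoad t.1 l +
      ∑ k : B, w (.inr k) * (if l = k.1 then M else 0) = m l := by
    simp [← congrFun hw l, g, mul_assoc]
  have hB₀ (l : ι) (k : B) : 0 ≤ w (.inr k) * (if l = k.1 then M else 0) :=
    mul_nonneg (hw₀ _) (by positivity)
  have hR₀ (t : R) : 0 ≤ w (.inl t) * (M / 4) := mul_nonneg (hw₀ _) (by positivity)
  refine ⟨fun t => w (.inl t) * (M / 4), ⟨hR₀, fun l => ?_⟩, ?_⟩
  · linarith [hcoord l, sum_nonneg fun k (_ : k ∈ univ) => hB₀ l k]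
  have hB : ∑ k : B, w (.inr k) * M ≤ ∑ k ∈ B, m k := by
    rw [← sum_coe_sort B]
    refine sum_le_sum fun k _ => ?_
    have hload : 0 ≤ ∑ t, w (.inl t) * (M / 4) * pathLoad t.1 k.1 :=
      sum_nonneg fun t _ => mul_nonneg (hR₀ t) (pathLoad_nonneg _ _)
    have hk := single_le_sum (fun k' _ => hB₀ k.1 k') (mem_univ k)
    rw [if_pos rfl] at hk
    linarith [hcoord k.1]
  rw [Fintype.sum_sum_type] at hw₁
  rw [← sum_mul] at hB ⊢
  linear_combination hB - M * hw₁

end FractionalTiling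

lemma exists_subset_forall_le_sum {α β : Type*} {g : α → β → ℝ}
    {X : Finset α} {Y : Finset β} {D : ℝ} (hD : 0 ≤ D)
    (hg : D * (#X + #Y) < ∑ x ∈ X, ∑ y ∈ Y, g x y) :
    ∃ X' ⊆ X, ∃ Y' ⊆ Y, X'.Nonempty ∧ (∀ x ∈ X', D ≤ ∑ y ∈ Y', g x y) ∧
      ∀ y ∈ Y', D ≤ ∑ x ∈ X', g x y := by
  classical
  obtain ⟨⟨X', Y'⟩, hXY, hmax⟩ := exists_max_image (X.powerset ×ˢ Y.powerset)
    (fun P => ∑ x ∈ P.1, ∑ y ∈ P.2, g x y - D * (#P.1 + #P.2)) ⟨(X, Y), by simp⟩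
  simp only [mem_product, mem_powerset, Prod.forall, and_imp] at hXY hmax
  obtain ⟨hX', hY'⟩ := hXY
  refine ⟨X', hX', Y', hY', ?_, fun x hx => ?_, fun y hy => ?_⟩
  · by_contra hempty
    have := hmax X Y subset_rfl subset_rfl
    simp only [not_nonempty_iff_eq_empty.1 hempty, sum_empty, card_empty, Nat.cast_zero] at this
    linarith [mul_nonneg hD (Nat.cast_nonneg (α := ℝ) #Y')]
  · have := hmax (X'.erase x) Y' ((erase_subset _ _).trans hX') hY'
    rw [← add_sum_erase _ _ hx, ← card_erase_add_one hx] at this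
    push_cast at this
    linarith
  · have := hmax X' (Y'.erase y) hX' ((erase_subset _ _).trans hY')
    rw [sum_comm, sum_comm (s := X'), ← add_sum_erase _ _ hy, ← card_erase_add_one hy] at this
    push_cast at this
    linarith

/-- The sequence `t.1, t.2.2, t.2.1, t.2.2` repeated with period four. -/
def zigzag {α : Type*} (t : α × α × α) (i : ℕ) : α :=
  if Odd i then t.2.2 else if 4 ∣ i then t.1 else t.2.1

lemma zigzag_map {α β : Type*} (g : α → β) (t : α × α × α) (i : ℕ) :
    zigzag (g t.1, g t.2.1, g t.2.2) i = g (zigzag t i) := by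
  simp only [zigzag, apply_ite g]

lemma card_filter_zigzag_eq {ι : Type*} [DecidableEq ι] (t : ι × ι × ι) (l : ι) (L : ℕ) :
    (#{i ∈ range (2 * (2 * L) + 1) | zigzag t i = l} : ℝ) =
      (if t.1 = l then 1 else 0) + L * pathLoad t l := by
  rw [card_filter, Nat.cast_sum]
  induction L with
  | zero => simp [zigzag]
  | succ L ih =>
    rw [show 2 * (2 * (L + 1)) + 1 = 2 * (2 * L) + 1 + 1 + 1 + 1 + 1 by ring]
    have h₁ : zigzag t (2 * (2 * L) + 1) = t.2.2 := by simp [zigzag]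
    have h₂ : zigzag t (2 * (2 * L) + 1 + 1) = t.2.1 := by grind [zigzag]
    have h₃ : zigzag t (2 * (2 * L) + 1 + 1 + 1) = t.2.2 := by grind [zigzag]
    have h₄ : zigzag t (2 * (2 * L) + 1 + 1 + 1 + 1) = t.1 := by grind [zigzag]
    simp only [sum_range_succ _ (_ + 1), ih, h₁, h₂, h₃, h₄, pathLoad]
    push_cast
    ring

section RoutedPaths

variable {V : Type} [DecidableEq V] {H : Finset (Finset V)}

/-- The indicator function of the edges of `H`, on ordered triples of vertices. -/
noncomputable def edgeIndicator (H : Finset (Finset V)) (w : V × V × V) : ℝ :=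
  if {w.1, w.2.1, w.2.2} ∈ H then 1 else 0

lemma edgeIndicator_nonneg (H : Finset (Finset V)) (w : V × V × V) : 0 ≤ edgeIndicator H w := by
  unfold edgeIndicator
  positivity

lemma edgeIndicator_le_one (H : Finset (Finset V)) (w : V × V × V) : edgeIndicator H w ≤ 1 := by
  unfold edgeIndicator
  split_ifs <;> norm_num

lemma edgeIndicator_swap (H : Finset (Finset V)) (x y z : V) :
    edgeIndicator H (x, y, z) = edgeIndicator H (y, x, z) := by
  simp only [edgeIndicator, insert_comm]

/-- `f` describes a loose path with `k` edges, or a single vertex if `k = 0`, whose `i`-th vertex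
lies in `P i`. -/
structure IsRoutedPath (H : Finset (Finset V)) (P : ℕ → Finset V) (k : ℕ) (f : ℕ → V) : Prop where
  injOn : Set.InjOn f (Set.Iic (2 * k))
  edge : ∀ i < k, {f (2 * i), f (2 * i + 1), f (2 * i + 2)} ∈ H
  mem : ∀ i ≤ 2 * k, f i ∈ P i

variable {P Q : ℕ → Finset V} {k : ℕ} {f : ℕ → V}

lemma mem_pathVerts {v : V} : v ∈ pathVerts k f ↔ ∃ i ≤ 2 * k, f i = v := by
  simp [pathVerts]

lemma card_pathVerts (hf : Set.InjOn f (Set.Iic (2 * k))) : #(pathVerts k f) = 2 * k + 1 := by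
  rw [pathVerts, card_image_of_injOn, card_range]
  exact hf.mono fun i hi => Nat.lt_succ_iff.1 (mem_range.1 hi)

namespace IsRoutedPath

lemma mono (hf : IsRoutedPath H P k f) (hPQ : ∀ i, P i ⊆ Q i) : IsRoutedPath H Q k f :=
  ⟨hf.injOn, hf.edge, fun i hi => hPQ i (hf.mem i hi)⟩

lemma isLoosePath (hf : IsRoutedPath H P k f) (hk : 1 ≤ k) : IsLoosePath H k f :=
  ⟨hk, fun _ hi _ hj hij => hf.injOn hi hj hij, hf.edge⟩

lemma disjoint_pathVerts {W : Finset V} (hf : IsRoutedPath H (fun i => P i \ W) k f) :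
    Disjoint (pathVerts k f) W := by
  refine disjoint_left.2 fun v hv => ?_
  obtain ⟨i, hi, rfl⟩ := mem_pathVerts.1 hv
  exact (mem_sdiff.1 (hf.mem i hi)).2

lemma exists_succ (hf : IsRoutedPath H P k f) {y z : V} (hy : y ∈ P (2 * k + 2) \ pathVerts k f)
    (hz : z ∈ P (2 * k + 1) \ pathVerts k f) (hyz : y ≠ z) (hH : {f (2 * k), y, z} ∈ H) :
    ∃ f', IsRoutedPath H P (k + 1) f' := by
  simp only [mem_sdiff, mem_pathVerts, not_exists, not_and] at hy hz
  let f' (i : ℕ) : V := if i ≤ 2 * k then f i else if i = 2 * k + 1 then z else y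
  have hold {i : ℕ} (hi : i ≤ 2 * k) : f' i = f i := if_pos hi
  have hnew₁ : f' (2 * k + 1) = z := by simp [f']
  have hnew₂ : f' (2 * k + 2) = y := by simp [f']
  refine ⟨f', fun i hi j hj hij => ?_, fun i hi => ?_, fun i hi => ?_⟩
  · rw [Set.mem_Iic] at hi hj
    have := @hf.injOn i
    grind
  · rcases Nat.lt_succ_iff_lt_or_eq.1 hi with hi | rfl
    · rw [hold (by omega), hold (by omega), hold (by omega)]
      exact hf.edge i hi
    · rw [hold le_rfl, hnew₁, hnew₂, pair_comm]
      exact hH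
  · obtain hi | rfl | rfl : i ≤ 2 * k ∨ i = 2 * k + 1 ∨ i = 2 * k + 2 := by omega
    · rw [hold hi]
      exact hf.mem i hi
    · exact hnew₁ ▸ hz.1
    · exact hnew₂ ▸ hy.1

end IsRoutedPath

variable [Fintype V]

lemma exists_edge_avoiding {a : V} {Y Z W : Finset V}
    (hW : 2 * #W * Fintype.card V < ∑ y ∈ Y, ∑ z ∈ Z, edgeIndicator H (a, y, z)) :
    ∃ y ∈ Y \ W, ∃ z ∈ Z \ W, {a, y, z} ∈ H := by
  by_contra! hno
  have hsub : {p ∈ Y ×ˢ Z | {a, p.1, p.2} ∈ H} ⊆ W ×ˢ univ ∪ univ ×ˢ W := fun p hp => by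
    have := hno p.1
    simp only [mem_filter, mem_product, mem_union, mem_sdiff, mem_univ] at hp this ⊢
    grind
  have hcard := (card_le_card hsub).trans (card_union_le _ _)
  simp only [card_product, card_univ] at hcard
  rw [← sum_product'] at hW
  simp only [edgeIndicator, sum_boole] at hW
  have : 2 * #W * Fintype.card V < #{p ∈ Y ×ˢ Z | {a, p.1, p.2} ∈ H} := by exact_mod_cast hW
  linarith

lemma exists_isRoutedPath (h3 : ∀ e ∈ H, #e = 3) {D : ℝ} (hne : (P 0).Nonempty)
    (hdeg : ∀ s, ∀ a ∈ P (2 * s),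
      D ≤ ∑ y ∈ P (2 * s + 2), ∑ z ∈ P (2 * s + 1), edgeIndicator H (a, y, z))
    (K : ℕ) (hD : 4 * K * Fintype.card V ≤ D) : ∃ f, IsRoutedPath H P K f := by
  obtain ⟨x, hx⟩ := hne
  have : Nonempty V := ⟨x⟩
  induction K with
  | zero => exact ⟨fun _ => x, fun i hi j hj _ => by simp_all, by simp, by simpa using hx⟩
  | succ K ih =>
    push_cast at hD
    obtain ⟨f, hf⟩ := ih (by nlinarith)
    obtain ⟨y, hy, z, hz, hH⟩ := exists_edge_avoiding (W := pathVerts K f) <|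
      calc 2 * (#(pathVerts K f) : ℝ) * Fintype.card V = (4 * K + 2) * Fintype.card V := by
            rw [card_pathVerts hf.injOn]
            push_cast
            ring
        _ < 4 * (K + 1) * Fintype.card V := by gcongr; linarith
        _ ≤ _ := hD.trans (hdeg K _ (hf.mem _ le_rfl))
    refine hf.exists_succ hy hz ?_ hH
    rintro rfl
    have := h3 _ hH
    have := card_le_two (a := f (2 * K)) (b := y)
    simp_all

lemma exists_isRoutedPath_zigzag (h3 : ∀ e ∈ H, #e = 3) {B : Finset V × Finset V × Finset V}
    {L : ℕ} (hB : 16 * L * (Fintype.card V : ℝ) ^ 2 <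
      ∑ w ∈ B.1 ×ˢ B.2.1 ×ˢ B.2.2, edgeIndicator H w) :
    ∃ f, IsRoutedPath H (zigzag B) (2 * L) f := by
  obtain ⟨X, Y, Z⟩ := B
  have hX : (#X : ℝ) ≤ Fintype.card V := mod_cast card_le_univ X
  have hY : (#Y : ℝ) ≤ Fintype.card V := mod_cast card_le_univ Y
  simp only [sum_product] at hB
  obtain ⟨X', hX', Y', hY', hne, hdegX, hdegY⟩ := exists_subset_forall_le_sum
    (D := 8 * L * Fintype.card V) (by positivity) <|
      calc 8 * L * (Fintype.card V : ℝ) * (#X + #Y)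
          ≤ 8 * L * (Fintype.card V : ℝ) * (Fintype.card V + Fintype.card V) := by gcongr
        _ = 16 * L * (Fintype.card V : ℝ) ^ 2 := by ring
        _ < _ := hB
  have hdeg (s : ℕ) (a : V) (ha : a ∈ zigzag (X', Y', Z) (2 * s)) :
      8 * L * Fintype.card V ≤ ∑ y ∈ zigzag (X', Y', Z) (2 * s + 2),
        ∑ z ∈ zigzag (X', Y', Z) (2 * s + 1), edgeIndicator H (a, y, z) := by
    rw [show zigzag (X', Y', Z) (2 * s + 1) = Z by simp [zigzag]]
    rcases Nat.even_or_odd s with hs | hs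
    · rw [show zigzag (X', Y', Z) (2 * s) = X' by grind [zigzag]] at ha
      rw [show zigzag (X', Y', Z) (2 * s + 2) = Y' by grind [zigzag]]
      exact hdegX a ha
    · rw [show zigzag (X', Y', Z) (2 * s) = Y' by grind [zigzag]] at ha
      simp only [show zigzag (X', Y', Z) (2 * s + 2) = X' by grind [zigzag], edgeIndicator_swap H a]
      exact hdegY a ha
  obtain ⟨f, hf⟩ := exists_isRoutedPath h3 (by simpa [zigzag] using hne) hdeg (2 * L)
    (by push_cast; linarith)
  refine ⟨f, hf.mono fun i => ?_⟩
  unfold zigzag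
  split_ifs
  exacts [subset_rfl, hX', hY']

end RoutedPaths

section Packing

variable {V : Type} {ι : Type*} [Fintype V] [DecidableEq V] [DecidableEq ι] {H : Finset (Finset V)}
  {c : V → ι} {t : ι × ι × ι} {L : ℕ} {η : ℝ}

lemma IsRoutedPath.card_pathVerts_inter_le {f : ℕ → V}
    (hf : IsRoutedPath H (fun i => colorClass c (zigzag t i)) (2 * L) f) (l : ι) :
    #(pathVerts (2 * L) f ∩ colorClass c l) ≤ (L + 1) * pathLoad t l := by
  have hsub : pathVerts (2 * L) f ∩ colorClass c l ⊆
      {i ∈ range (2 * (2 * L) + 1) | zigzag t i = l}.image f := fun v hv => by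
    rw [mem_inter, mem_pathVerts, mem_colorClass] at hv
    obtain ⟨⟨i, hi, rfl⟩, hl⟩ := hv
    exact mem_image_of_mem f <| mem_filter.2
      ⟨mem_range.2 (Nat.lt_succ_iff.2 hi), (mem_colorClass.1 (hf.mem i hi)).symm.trans hl⟩
  have hle : (if t.1 = l then 1 else 0) ≤ pathLoad t l := by
    unfold pathLoad
    rw [add_assoc]
    exact le_add_of_nonneg_right (by positivity)
  calc (#(pathVerts (2 * L) f ∩ colorClass c l) : ℝ)
      ≤ #{i ∈ range (2 * (2 * L) + 1) | zigzag t i = l} :=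
        mod_cast (card_le_card hsub).trans card_image_le
    _ = (if t.1 = l then 1 else 0) + L * pathLoad t l := card_filter_zigzag_eq t l L
    _ ≤ (L + 1) * pathLoad t l := by linarith

/-- Every sub-box of the cell of `t` with `η`-large sides contains more than `d` (ordered) edges. -/
def IsRobustlyDense (H : Finset (Finset V)) (c : V → ι) (η d : ℝ) (t : ι × ι × ι) : Prop :=
  ∀ X Y Z : Finset V, IsLargeSubset η X (colorClass c t.1) →
    IsLargeSubset η Y (colorClass c t.2.1) → IsLargeSubset η Z (colorClass c t.2.2) →
    d < ∑ w ∈ X ×ˢ Y ×ˢ Z, edgeIndicator H w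

lemma IsRobustlyDense.exists_isRoutedPath_sdiff
    (ht : IsRobustlyDense H c η (16 * L * (Fintype.card V : ℝ) ^ 2) t) (h3 : ∀ e ∈ H, #e = 3)
    {W : Finset V} (hW : ∀ l, #(W ∩ colorClass c l) ≤ (1 - η) * #(colorClass c l)) :
    ∃ f, IsRoutedPath H (fun i => colorClass c (zigzag t i) \ W) (2 * L) f := by
  have hlarge (l : ι) : IsLargeSubset η (colorClass c l \ W) (colorClass c l) := by
    refine ⟨sdiff_subset, ?_⟩
    have := card_sdiff_add_card_inter (colorClass c l) W
    rw [inter_comm] at this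
    rify at this
    linarith [hW l]
  simp only [← zigzag_map fun l => colorClass c l \ W]
  exact exists_isRoutedPath_zigzag h3 (ht _ _ _ (hlarge _) (hlarge _) (hlarge _))

theorem exists_pairwiseDisjoint_isRoutedPath [Nonempty V] {J : Type*}
    {s : J → ι × ι × ι} (h3 : ∀ e ∈ H, #e = 3)
    (hs : ∀ j, IsRobustlyDense H c η (16 * L * (Fintype.card V : ℝ) ^ 2) (s j)) (S : Finset J)
    (hS : ∀ l, ∑ j ∈ S, (L + 1) * pathLoad (s j) l ≤ (1 - η) * #(colorClass c l)) :
    ∃ f : J → ℕ → V,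
      (∀ j ∈ S, IsRoutedPath H (fun i => colorClass c (zigzag (s j) i)) (2 * L) (f j)) ∧
      (S : Set J).PairwiseDisjoint fun j => pathVerts (2 * L) (f j) := by
  classical
  induction S using Finset.induction_on with
  | empty => exact ⟨fun _ _ => Classical.arbitrary V, by simp, by simp⟩
  | insert a S ha ih =>
    have hload (l : ι) : 0 ≤ (L + 1) * pathLoad (s a) l :=
      mul_nonneg (by positivity) (pathLoad_nonneg _ _)
    simp only [sum_insert ha] at hS
    obtain ⟨f, hf, hdisj⟩ := ih fun l => by linarith [hS l, hload l]
    have hused (l : ι) : #(S.biUnion (fun j => pathVerts (2 * L) (f j)) ∩ colorClass c l) ≤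
        (1 - η) * #(colorClass c l) :=
      calc (#(S.biUnion (fun j => pathVerts (2 * L) (f j)) ∩ colorClass c l) : ℝ)
          ≤ ∑ j ∈ S, (#(pathVerts (2 * L) (f j) ∩ colorClass c l) : ℝ) := by
            rw [biUnion_inter]
            exact_mod_cast card_biUnion_le
        _ ≤ ∑ j ∈ S, (L + 1) * pathLoad (s j) l :=
            sum_le_sum fun j hj => (hf j hj).card_pathVerts_inter_le l
        _ ≤ _ := by linarith [hS l, hload l]
    obtain ⟨g, hg⟩ := (hs a).exists_isRoutedPath_sdiff h3 hused
    have hne {j : J} (hj : j ∈ S) : Function.update f a g j = f j :=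
      Function.update_of_ne (ne_of_mem_of_not_mem hj ha) _ _
    refine ⟨Function.update f a g, forall_mem_insert .. |>.2 ⟨?_, fun j hj => ?_⟩, ?_⟩
    · rw [Function.update_self]
      exact hg.mono fun _ => sdiff_subset
    · rw [hne hj]
      exact hf j hj
    · rw [coe_insert]
      refine (Set.pairwiseDisjoint_insert_of_notMem (mem_coe.not.2 ha)).2 ⟨?_, fun j hj => ?_⟩
      · intro i hi j hj hij
        simpa only [Function.onFun, hne hi, hne hj] using hdisj hi hj hij
      · rw [Function.update_self, hne hj]
        exact hg.disjoint_pathVerts.mono_right 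
          (subset_biUnion_of_mem (fun j => pathVerts (2 * L) (f j)) hj)

end Packing

section ReducedTriples

variable {V ι : Type*} [Fintype V] [DecidableEq ι]

lemma sum_card_colorClass_mul_card_colorClass (c : V → ι) (P : Finset (ι × ι)) :
    ∑ p ∈ P, #(colorClass c p.1) * #(colorClass c p.2) = #{x : V × V | (c x.1, c x.2) ∈ P} := by
  rw [← sum_card_fiberwise_eq_card_filter]
  refine sum_congr rfl fun p _ => ?_
  rw [← card_product]
  congr 1
  ext x
  simp [mem_colorClass, Prod.ext_iff]

lemma sum_card_colorClass_le_of_forall_le {g : V → ℝ} (hg : ∀ z, 0 ≤ g z) {c : V → ι} {s : ℝ}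
    {B : Finset ι} (hB : ∀ k ∈ B, ∀ z, c z = k → s ≤ g z) :
    s * ∑ k ∈ B, (#(colorClass c k) : ℝ) ≤ ∑ z, g z :=
  calc s * ∑ k ∈ B, (#(colorClass c k) : ℝ) = ∑ k ∈ B, #(colorClass c k) • s := by
        simp only [mul_sum, nsmul_eq_mul, mul_comm]
    _ ≤ ∑ k ∈ B, ∑ z ∈ colorClass c k, g z := sum_le_sum fun k hk =>
        card_nsmul_le_sum _ _ _ fun z hz => hB k hk z (mem_colorClass.1 hz)
    _ = ∑ z with c z ∈ B, g z := sum_fiberwise_eq_sum_filter univ B c g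
    _ ≤ ∑ z, g z := sum_le_univ_sum_of_nonneg hg

/-- The cells that can host paths: lower regular ones of density at least `2 * ε`, with at least `κ`
vertices in each colour class. -/
structure IsUsable (ε κ : ℝ) (f : V × V × V → ℝ) (c : V → ι) (t : ι × ι × ι) : Prop where
  isLowerRegular : IsLowerRegular ε f c t
  le_cellMean : 2 * ε ≤ cellMean f (tripleColor c) t
  le_card_fst : κ ≤ #(colorClass c t.1)
  le_card_snd : κ ≤ #(colorClass c t.2.1)
  le_card_thd : κ ≤ #(colorClass c t.2.2)

lemma card_filter_colorClass_lt_le [Fintype ι] (c : V → ι) {κ : ℝ} (hκ : 0 ≤ κ) :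
    #{v | (#(colorClass c (c v)) : ℝ) < κ} ≤ κ * Fintype.card ι := by
  let S : Finset ι := {i | (#(colorClass c i) : ℝ) < κ}
  have hfiber : #{v | (#(colorClass c (c v)) : ℝ) < κ} = ∑ i ∈ S, #(colorClass c i) :=
    .trans (by simp [S]) (sum_card_fiberwise_eq_card_filter univ S c).symm
  rw [hfiber, Nat.cast_sum]
  calc ∑ i ∈ S, (#(colorClass c i) : ℝ) ≤ #S • κ :=
        sum_le_card_nsmul _ _ _ fun i hi => (mem_filter.1 hi).2.le
    _ ≤ κ * Fintype.card ι := by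
        rw [nsmul_eq_mul, mul_comm]
        gcongr
        exact card_le_univ S

lemma card_filter_exists_colorClass_lt_le [Fintype ι] (c : V → ι) {κ : ℝ} (hκ : 0 ≤ κ) :
    #{w : V × V × V | (#(colorClass c (c w.1)) : ℝ) < κ ∨ (#(colorClass c (c w.2.1)) : ℝ) < κ ∨
      (#(colorClass c (c w.2.2)) : ℝ) < κ} ≤ 3 * (κ * Fintype.card ι) * Fintype.card V ^ 2 := by
  classical
  set S : Finset V := {v | (#(colorClass c (c v)) : ℝ) < κ}
  have hsub : ({w | (#(colorClass c (c w.1)) : ℝ) < κ ∨ (#(colorClass c (c w.2.1)) : ℝ) < κ ∨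
      (#(colorClass c (c w.2.2)) : ℝ) < κ} : Finset (V × V × V)) ⊆
      S ×ˢ univ ∪ (univ ×ˢ S ×ˢ univ ∪ univ ×ˢ univ ×ˢ S) := fun w => by
    simp [S]
  have hcard := (card_le_card hsub).trans <|
    (card_union_le _ _).trans (add_le_add_right (card_union_le _ _) _)
  simp only [card_product, card_univ, Fintype.card_prod] at hcard
  calc _ ≤ 3 * (#S : ℝ) * Fintype.card V ^ 2 := by
        rify at hcard
        linarith
    _ ≤ _ := by
        gcongr
        exact card_filter_colorClass_lt_le c hκ

open scoped Classical in
lemma sum_filter_not_isUsable_le [Fintype ι] {f : V × V × V → ℝ} (hf₀ : ∀ w, 0 ≤ f w)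
    (hf₁ : ∀ w, f w ≤ 1) (c : V → ι) {ε κ : ℝ} (hε : 0 ≤ ε) (hκ : 0 ≤ κ) :
    ∑ w with ¬IsUsable ε κ f c (tripleColor c w), f w ≤
      #{w | ¬IsLowerRegular ε f c (tripleColor c w)} + 2 * ε * Fintype.card V ^ 3 +
        3 * (κ * Fintype.card ι) * Fintype.card V ^ 2 := by
  have hlow := sum_filter_cellMean_lt_le f (tripleColor c) (s := 2 * ε) (by positivity)
  have hsmall := card_filter_exists_colorClass_lt_le c hκ
  rw [Fintype.card_prod, Fintype.card_prod] at hlow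
  push_cast at hlow
  refine le_trans ?_ (add_le_add (add_le_add_right (hlow.trans_eq (by ring)) _) hsmall)
  rw [← sum_boole, ← sum_boole, sum_filter, sum_filter, ← sum_add_distrib, ← sum_add_distrib]
  refine sum_le_sum fun w _ => ?_
  have hw : IsLowerRegular ε f c (tripleColor c w) →
      ¬cellMean f (tripleColor c) (tripleColor c w) < 2 * ε →
      ¬((#(colorClass c (c w.1)) : ℝ) < κ ∨ (#(colorClass c (c w.2.1)) : ℝ) < κ ∨
        (#(colorClass c (c w.2.2)) : ℝ) < κ) → IsUsable ε κ f c (tripleColor c w) := by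
    intro hreg hmean hcard
    simp only [not_or, not_lt] at hmean hcard
    exact ⟨hreg, hmean, hcard.1, hcard.2.1, hcard.2.2⟩
  have := hf₀ w
  have := hf₁ w
  split_ifs <;> first | linarith | tauto

/-- The colour classes left out of the tiling are those all of whose vertices lie in many triples
outside `R`. -/
theorem exists_isFracPathTiling_colorClass [Finite ι] [Nonempty V] {f : V × V × V → ℝ}
    (hf₀ : ∀ w, 0 ≤ f w) (hf₁ : ∀ w, f w ≤ 1) {c : V → ι} {R : Finset (ι × ι × ι)} {β η : ℝ}
    (hβ : 0 < β)
    (hdeg : ∀ z, (7 / 16 + β) * (Fintype.card V : ℝ) ^ 2 ≤ ∑ p : V × V, f (p.1, p.2, z))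
    (hR : ∑ w with tripleColor c w ∉ R, f w ≤ η * β * Fintype.card V ^ 3) :
    ∃ h, IsFracPathTiling R (fun i => (#(colorClass c i) : ℝ)) h ∧
      (1 - η) * Fintype.card V ≤ 4 * ∑ t, h t := by
  cases nonempty_fintype ι
  have : Nonempty ι := .map c ‹_›
  have hcard : (0 : ℝ) < Fintype.card V := by exact_mod_cast Fintype.card_pos
  have hsum : ∑ i, (#(colorClass c i) : ℝ) = Fintype.card V := by
    exact_mod_cast (card_eq_sum_card_fiberwise fun v (_ : v ∈ univ) => mem_univ (c v)).symm
  set n : ℝ := (Fintype.card V : ℝ)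
  let waste (z : V) : ℝ := ∑ p : V × V with (c p.1, c p.2, c z) ∉ R, f (p.1, p.2, z)
  have hwaste : ∑ z, waste z = ∑ w with tripleColor c w ∉ R, f w := by
    simp only [waste, sum_filter, Fintype.sum_prod_type]
    refine sum_comm.trans (sum_congr rfl fun x _ => ?_)
    exact sum_comm
  let B : Finset ι := {k | ∀ z, c z = k → β * n ^ 2 ≤ waste z}
  have hB : ∑ k ∈ B, (#(colorClass c k) : ℝ) ≤ η * n := by
    have hle := sum_card_colorClass_le_of_forall_le (g := waste)
      (fun z => sum_nonneg fun _ _ => hf₀ _) fun k (hk : k ∈ B) => (mem_filter.1 hk).2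
    refine le_of_mul_le_mul_left (hle.trans ?_) (by positivity : 0 < β * n ^ 2)
    linarith
  have hgood (k : ι) (hk : k ∉ B) : 7 / 16 * (∑ i, (#(colorClass c i) : ℝ)) ^ 2 <
      ∑ p : ι × ι with (p.1, p.2, k) ∈ R, (#(colorClass c p.1) : ℝ) * #(colorClass c p.2) := by
    simp only [B, mem_filter_univ, not_forall, not_le] at hk
    obtain ⟨z, rfl, hz⟩ := hk
    have hpairs : ∑ p : V × V with (c p.1, c p.2, c z) ∈ R, f (p.1, p.2, z) ≤
        ∑ p : ι × ι with (p.1, p.2, c z) ∈ R, (#(colorClass c p.1) : ℝ) * #(colorClass c p.2) := by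
      refine (sum_le_card_nsmul _ _ 1 fun p _ => hf₁ _).trans_eq ?_
      rw [nsmul_one]
      exact_mod_cast (by simp [sum_card_colorClass_mul_card_colorClass])
    have hsplit := sum_filter_add_sum_filter_not univ
      (fun p : V × V => (c p.1, c p.2, c z) ∈ R) fun p => f (p.1, p.2, z)
    rw [hsum]
    linarith [hdeg z]
  obtain ⟨h, hh, hle⟩ := exists_isFracPathTiling (fun i => Nat.cast_nonneg _) hgood
  exact ⟨h, hh, by linarith⟩

end ReducedTriples

section Degrees

variable {V : Type} [Fintype V] [DecidableEq V] {H : Finset (Finset V)}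

lemma two_mul_card_filter_mem_le_sum_edgeIndicator (h3 : ∀ e ∈ H, #e = 3) (z : V) :
    2 * (#{e ∈ H | z ∈ e} : ℝ) ≤ ∑ p : V × V, edgeIndicator H (p.1, p.2, z) := by
  let S : Finset (V × V) := {p | ({p.1, p.2, z} : Finset V) ∈ H}
  have hmaps (p : V × V) (hp : p ∈ S) : ({p.1, p.2, z} : Finset V) ∈ H.filter (z ∈ ·) := by
    simpa [S] using hp
  have hfiber (e : Finset V) (he : e ∈ H.filter (z ∈ ·)) :
      2 ≤ #{p ∈ S | ({p.1, p.2, z} : Finset V) = e} := by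
    rw [mem_filter] at he
    have hcard : #(e.erase z) = 2 := by rw [card_erase_of_mem he.2, h3 e he.1]
    calc 2 = #(e.erase z).offDiag := by rw [offDiag_card, hcard]
      _ ≤ _ := card_le_card fun p hp => by
        have hpair : {p.1, p.2} = e.erase z := by
          obtain ⟨h₁, h₂, hne⟩ := mem_offDiag.1 hp
          refine eq_of_subset_of_card_le (insert_subset h₁ (singleton_subset_iff.2 h₂)) ?_
          rw [hcard, card_pair hne]
        have htriple : ({p.1, p.2, z} : Finset V) = e := by
          rw [← insert_erase he.2, ← hpair, insert_comm z, pair_comm z]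
        simp [S, htriple, he.1]
  have hcount := mul_card_image_le_card_of_maps_to hmaps 2 hfiber
  simp only [edgeIndicator, sum_boole]
  exact_mod_cast (by omega : 2 * #(H.filter (z ∈ ·)) ≤ #S)

lemma add_mul_sq_le_sum_edgeIndicator (h3 : ∀ e ∈ H, #e = 3) {γ : ℝ}
    (hn : 7 / 8 + 2 * γ ≤ γ * Fintype.card V)
    (hdeg : ∀ v, (7 / 16 + γ) * ((Fintype.card V).choose 2 : ℝ) ≤ #{e ∈ H | v ∈ e}) (z : V) :
    (7 / 16 + γ / 2) * (Fintype.card V : ℝ) ^ 2 ≤ ∑ p : V × V, edgeIndicator H (p.1, p.2, z) := by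
  have hz := hdeg z
  rw [Nat.cast_choose_two] at hz
  have := two_mul_card_filter_mem_le_sum_edgeIndicator h3 z
  nlinarith [mul_le_mul_of_nonneg_right hn (Nat.cast_nonneg (α := ℝ) (Fintype.card V))]

end Degrees

lemma IsUsable.isRobustlyDense {V : Type} {ι : Type*} [Fintype V] [DecidableEq V] [DecidableEq ι]
    {H : Finset (Finset V)} {c : V → ι} {t : ι × ι × ι} {ε κ η d : ℝ}
    (ht : IsUsable ε κ (edgeIndicator H) c t) (hε : 0 < ε) (hεη : ε ≤ η) (hκ : 0 ≤ κ)
    (hd : d < ε * (η * κ) ^ 3) : IsRobustlyDense H c η d t := by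
  intro X Y Z hX hY hZ
  have hη : 0 ≤ η := hε.le.trans hεη
  have hregular {X A : Finset V} (hX : IsLargeSubset η X A) : IsLargeSubset ε X A :=
    ⟨hX.1, le_trans (by gcongr) hX.2⟩
  have hside {X A : Finset V} (hX : IsLargeSubset η X A) (hA : κ ≤ #A) : η * κ ≤ #X :=
    le_trans (by gcongr) hX.2
  calc d < ε * (η * κ) ^ 3 := hd
    _ = ε * (η * κ * (η * κ * (η * κ))) := by ring
    _ ≤ ε * (#X * (#Y * #Z)) := by
        gcongr
        exacts [hside hX ht.le_card_fst, hside hY ht.le_card_snd, hside hZ ht.le_card_thd]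
    _ = ε * #(X ×ˢ Y ×ˢ Z) := by simp only [card_product, Nat.cast_mul]
    _ ≤ (cellMean (edgeIndicator H) (tripleColor c) t - ε) * #(X ×ˢ Y ×ˢ Z) := by
        gcongr
        linarith [ht.le_cellMean]
    _ ≤ _ := ht.isLowerRegular X Y Z (hregular hX) (hregular hY) (hregular hZ)

lemma IsFracPathTiling.exists_integral {ι : Type*} [DecidableEq ι] {R : Finset (ι × ι × ι)}
    {m : ι → ℝ} {h : R → ℝ} (hh : IsFracPathTiling R m h) {N θ : ℝ} (hN : 0 < N) (hθ : 0 ≤ θ) :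
    ∃ (q : ℕ) (s : Fin q → R), (∀ l, ∑ j, N * pathLoad (s j).1 l ≤ θ * m l) ∧
      θ * ∑ t, h t ≤ N * (q + #R) := by
  let a (t : R) : ℕ := ⌊θ * h t / N⌋₊
  have hle (t : R) : N * a t ≤ θ * h t := by
    rw [mul_comm, ← le_div_iff₀ hN]
    exact Nat.floor_le (div_nonneg (mul_nonneg hθ (hh.nonneg t)) hN.le)
  have hlt (t : R) : θ * h t ≤ N * (a t + 1) := by
    rw [← div_le_iff₀' hN]
    exact (Nat.lt_floor_add_one _).le
  let e := Fintype.equivFin (Σ t : R, Fin (a t))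
  refine ⟨_, fun j => (e.symm j).1, fun l => ?_, ?_⟩
  · calc ∑ j, N * pathLoad (e.symm j).1.1 l
        = ∑ x : Σ t : R, Fin (a t), N * pathLoad x.1.1 l :=
          e.symm.sum_comp fun x => N * pathLoad x.1.1 l
      _ = ∑ t, N * a t * pathLoad t.1 l := by
          rw [Fintype.sum_sigma]
          refine sum_congr rfl fun t _ => ?_
          simp only [sum_const, card_univ, Fintype.card_fin, nsmul_eq_mul]
          ring
      _ ≤ ∑ t, θ * h t * pathLoad t.1 l :=
          sum_le_sum fun t _ => mul_le_mul_of_nonneg_right (hle t) (pathLoad_nonneg _ _)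
      _ = θ * ∑ t, h t * pathLoad t.1 l := by simp only [mul_sum, mul_assoc]
      _ ≤ θ * m l := by gcongr; exact hh.load_le l
  · calc θ * ∑ t, h t = ∑ t, θ * h t := mul_sum ..
      _ ≤ ∑ t, N * (a t + 1) := sum_le_sum fun t _ => hlt t
      _ = N * (Fintype.card (Σ t : R, Fin (a t)) + #R) := by
          simp [← mul_sum, sum_add_distrib]

/-- A path with `2 * L` edges has `4 * L + 1` vertices but takes up to `4 * (L + 1)` of the capacity
of the colour classes. -/
lemma one_sub_mul_le_mul_of_tiling {n S q r L η : ℝ} (hη : 0 ≤ η) (hη₁ : η ≤ 1) (hn : 0 ≤ n)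
    (hq : 0 ≤ q) (hr : 0 ≤ r) (htile : (1 - η) * n ≤ 4 * S)
    (hround : (1 - η) * S ≤ (L + 1) * (q + r)) (hL : 1 ≤ η * (L + 1))
    (hrL : r * (4 * L + 1) ≤ η * n) :
    (1 - 4 * η) * n ≤ q * (4 * L + 1) := by
  have hcube : (1 - 3 * η) * n ≤ (1 - η) ^ 3 * n := by
    gcongr
    nlinarith [mul_nonneg hη hη, mul_nonneg (mul_nonneg hη hη) (sub_nonneg.2 hη₁)]
  have htotal : (1 - η) ^ 3 * n ≤ (q + r) * (4 * L + 1) :=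
    calc (1 - η) ^ 3 * n = (1 - η) ^ 2 * ((1 - η) * n) := by ring
      _ ≤ (1 - η) ^ 2 * (4 * S) := by gcongr
      _ = 4 * (1 - η) * ((1 - η) * S) := by ring
      _ ≤ 4 * (1 - η) * ((L + 1) * (q + r)) := by
          have : 0 ≤ 1 - η := sub_nonneg.2 hη₁
          gcongr
      _ = (q + r) * (4 * (L + 1) - 4 * (η * (L + 1))) := by ring
      _ ≤ (q + r) * (4 * L + 1) := by
          gcongr
          linarith
  linarith

section PathFamilies

variable {V : Type} [DecidableEq V] {H : Finset (Finset V)} {J : Type*}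

/-- `f` describes a family of vertex-disjoint loose paths in `H`, each with `k` edges. -/
structure IsPathFamily (H : Finset (Finset V)) (k : ℕ) (f : J → ℕ → V) : Prop where
  isLoosePath : ∀ j, IsLoosePath H k (f j)
  disjoint : Pairwise fun i j => Disjoint (pathVerts k (f i)) (pathVerts k (f j))

lemma IsPathFamily.card_biUnion_pathVerts [Fintype J] {k : ℕ} {f : J → ℕ → V}
    (hf : IsPathFamily H k f) :
    #(univ.biUnion fun j => pathVerts k (f j)) = Fintype.card J * (2 * k + 1) := by
  rw [card_biUnion fun i _ j _ hij => hf.disjoint hij]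
  refine sum_const_nat fun j _ => card_pathVerts fun i hi i' hi' => ?_
  exact (hf.isLoosePath j).2.1 i hi i' hi'

variable [Fintype V]

lemma IsPathFamily.card_mul_le_one [Fintype J] {k : ℕ} {f : J → ℕ → V} (hf : IsPathFamily H k f)
    {δ : ℝ} (hδ : 0 ≤ δ) (hk : δ * Fintype.card V ≤ 2 * k + 1) : Fintype.card J * δ ≤ 1 := by
  have hle : (Fintype.card J * (2 * k + 1) : ℝ) ≤ Fintype.card V := by
    exact_mod_cast hf.card_biUnion_pathVerts.symm.trans_le (card_le_univ _)
  refine le_of_mul_le_mul_right ?_ (by positivity : (0 : ℝ) < 2 * k + 1)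
  calc Fintype.card J * δ * (2 * k + 1) = δ * (Fintype.card J * (2 * k + 1)) := by ring
    _ ≤ δ * Fintype.card V := by gcongr
    _ ≤ 1 * (2 * k + 1) := by rwa [one_mul]

variable [Nonempty V] {ι : Type*} [DecidableEq ι] {c : V → ι} {L : ℕ}

lemma exists_isPathFamily_of_isRobustlyDense (h3 : ∀ e ∈ H, #e = 3) (hL : 1 ≤ L) {η : ℝ}
    (hη : η ≤ 1) {R : Finset (ι × ι × ι)} {h : R → ℝ}
    (hR : ∀ t ∈ R, IsRobustlyDense H c η (16 * L * (Fintype.card V : ℝ) ^ 2) t)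
    (hh : IsFracPathTiling R (fun i => (#(colorClass c i) : ℝ)) h) :
    ∃ (q : ℕ) (f : Fin q → ℕ → V), IsPathFamily H (2 * L) f ∧
      (1 - η) * ∑ t, h t ≤ (L + 1) * (q + #R) := by
  obtain ⟨q, s, hload, hq⟩ :=
    hh.exists_integral (N := L + 1) (θ := 1 - η) (by positivity) (sub_nonneg.2 hη)
  obtain ⟨f, hf, hdisj⟩ :=
    exists_pairwiseDisjoint_isRoutedPath h3 (fun j => hR _ (s j).2) univ hload
  exact ⟨q, f, ⟨fun j => (hf j (mem_univ j)).isLoosePath (by omega),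
    fun i j hij => hdisj (mem_coe.2 (mem_univ i)) (mem_coe.2 (mem_univ j)) hij⟩, hq⟩

variable [Fintype ι]

open scoped Classical in
theorem exists_isPathFamily_of_isLowerRegular (h3 : ∀ e ∈ H, #e = 3) {β η ε κ : ℝ} (hβ : 0 < β)
    (hdeg : ∀ z, (7 / 16 + β) * (Fintype.card V : ℝ) ^ 2 ≤
      ∑ p : V × V, edgeIndicator H (p.1, p.2, z))
    (hη₁ : η ≤ 1) (hε : 0 < ε) (hεη : ε ≤ η) (hεβ : 6 * ε ≤ η * β) (hκ : 0 ≤ κ)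
    (hirr : #{w | ¬IsLowerRegular ε (edgeIndicator H) c (tripleColor c w)} ≤
      ε * Fintype.card V ^ 3)
    (hκε : κ * Fintype.card ι ≤ ε * Fintype.card V) (hL₁ : 1 ≤ L)
    (hdense : 16 * L * (Fintype.card V : ℝ) ^ 2 < ε * (η * κ) ^ 3) (hL : 1 ≤ η * (L + 1))
    (hrL : (Fintype.card ι : ℝ) ^ 3 * (4 * L + 1) ≤ η * Fintype.card V) :
    ∃ (q : ℕ) (f : Fin q → ℕ → V), IsPathFamily H (2 * L) f ∧
      (1 - 4 * η) * Fintype.card V ≤ q * (4 * L + 1) := by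
  let R : Finset (ι × ι × ι) := {t | IsUsable ε κ (edgeIndicator H) c t}
  have hwaste : ∑ w with tripleColor c w ∉ R, edgeIndicator H w ≤ η * β * Fintype.card V ^ 3 := by
    have hle := sum_filter_not_isUsable_le (edgeIndicator_nonneg H) (edgeIndicator_le_one H) c
      hε.le hκ
    simp only [R, mem_filter_univ]
    have hκn := mul_le_mul_of_nonneg_right hκε (sq_nonneg (Fintype.card V : ℝ))
    have hεn := mul_le_mul_of_nonneg_right hεβ (pow_nonneg (Fintype.card V).cast_nonneg 3)
    linarith
  obtain ⟨h, hh, htile⟩ := exists_isFracPathTiling_colorClass (edgeIndicator_nonneg H)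
    (edgeIndicator_le_one H) hβ hdeg hwaste
  obtain ⟨q, f, hf, hround⟩ := exists_isPathFamily_of_isRobustlyDense h3 hL₁ hη₁
    (fun t ht => ((mem_filter_univ t).1 ht).isRobustlyDense hε hεη hκ hdense) hh
  have hRcard : (#R : ℝ) ≤ Fintype.card ι ^ 3 := by
    have := card_le_univ R
    rw [Fintype.card_prod, Fintype.card_prod] at this
    exact_mod_cast this.trans_eq (by ring)
  refine ⟨q, f, hf, one_sub_mul_le_mul_of_tiling (hε.le.trans hεη) hη₁ (Nat.cast_nonneg _)
    (Nat.cast_nonneg _) (Nat.cast_nonneg _) htile hround hL (le_trans ?_ hrL)⟩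
  gcongr

open scoped Classical in
theorem exists_isPathFamily_of_card_le (h3 : ∀ e ∈ H, #e = 3) {β η ε σ T : ℝ} (hβ : 0 < β)
    (hdeg : ∀ z, (7 / 16 + β) * (Fintype.card V : ℝ) ^ 2 ≤
      ∑ p : V × V, edgeIndicator H (p.1, p.2, z))
    (hη₁ : η ≤ 1) (hε : 0 < ε) (hεη : ε ≤ η) (hεβ : 6 * ε ≤ η * β)
    (hirr : #{w | ¬IsLowerRegular ε (edgeIndicator H) c (tripleColor c w)} ≤
      ε * Fintype.card V ^ 3)
    (hT : 0 < T) (hι : Fintype.card ι ≤ T) (hσ : 0 ≤ σ) (hdense : 16 * σ < ε * (η * (ε / T)) ^ 3)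
    (hσT : 5 * T ^ 3 * σ ≤ η) (hn : 1 ≤ η * σ * Fintype.card V) :
    ∃ (q k : ℕ) (f : Fin q → ℕ → V), IsPathFamily H k f ∧ η * σ * Fintype.card V ≤ 2 * k + 1 ∧
      (1 - 4 * η) * Fintype.card V ≤ q * (2 * k + 1) := by
  have hcard : (0 : ℝ) < Fintype.card V := by exact_mod_cast Fintype.card_pos
  set n : ℝ := (Fintype.card V : ℝ)
  have hη : 0 < η := hε.trans_le hεη
  have hσn : η * σ * n ≤ σ * n := by
    rw [mul_assoc]
    exact mul_le_of_le_one_left (by positivity) hη₁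
  obtain ⟨L, hL_le, hlt_L⟩ : ∃ L : ℕ, (L : ℝ) ≤ σ * n ∧ σ * n < L + 1 :=
    ⟨_, Nat.floor_le (by positivity), Nat.lt_floor_add_one _⟩
  have hL₁ : 1 ≤ L := by
    have : (1 : ℝ) < L + 1 := (hn.trans hσn).trans_lt hlt_L
    exact_mod_cast Nat.lt_add_one_iff.1 (by exact_mod_cast this)
  have hκε : ε / T * n * Fintype.card ι ≤ ε * n :=
    calc ε / T * n * Fintype.card ι ≤ ε / T * n * T := by gcongr
      _ = ε * n := by field_simp
  have hLdense : 16 * L * n ^ 2 < ε * (η * (ε / T * n)) ^ 3 :=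
    calc 16 * L * n ^ 2 ≤ 16 * (σ * n) * n ^ 2 := by gcongr
      _ = 16 * σ * n ^ 3 := by ring
      _ < ε * (η * (ε / T)) ^ 3 * n ^ 3 := by gcongr
      _ = ε * (η * (ε / T * n)) ^ 3 := by ring
  have hLη : 1 ≤ η * (L + 1) := by
    rw [mul_assoc] at hn
    exact hn.trans (by gcongr)
  have hTL : (Fintype.card ι : ℝ) ^ 3 * (4 * L + 1) ≤ η * n := by
    have : (1 : ℝ) ≤ L := by exact_mod_cast hL₁
    calc (Fintype.card ι : ℝ) ^ 3 * (4 * L + 1) ≤ T ^ 3 * (5 * (σ * n)) := by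
          gcongr
          linarith
      _ = 5 * T ^ 3 * σ * n := by ring
      _ ≤ η * n := by gcongr
  obtain ⟨q, f, hf, hcover⟩ := exists_isPathFamily_of_isLowerRegular h3 hβ hdeg hη₁ hε hεη hεβ
    (by positivity) hirr hκε hL₁ hLdense hLη hTL
  refine ⟨q, 2 * L, f, hf, ?_, ?_⟩ <;> push_cast <;> linarith

end PathFamilies

/-- The number of paths is bounded because each of them covers a positive proportion `δ` of the
vertices. -/
theorem exists_isPathFamily_of_le_sum_edgeIndicator {β a : ℝ} (hβ : 0 < β) (ha : 0 < a) :
    ∃ δ > (0 : ℝ), ∀ (V : Type) [Fintype V] [DecidableEq V] (H : Finset (Finset V)),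
      (∀ e ∈ H, #e = 3) →
      (∀ z, (7 / 16 + β) * (Fintype.card V : ℝ) ^ 2 ≤
        ∑ p : V × V, edgeIndicator H (p.1, p.2, z)) →
      1 ≤ δ * Fintype.card V →
      ∃ (q k : ℕ) (f : Fin q → ℕ → V), IsPathFamily H k f ∧ δ * Fintype.card V ≤ 2 * k + 1 ∧
        (1 - a) * Fintype.card V ≤ q * (2 * k + 1) := by
  obtain ⟨η, hη, hη₁, hηa⟩ : ∃ η : ℝ, 0 < η ∧ η ≤ 1 ∧ 4 * η ≤ a :=
    ⟨min 1 (a / 4), by positivity, min_le_left _ _, by linarith [min_le_right 1 (a / 4)]⟩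
  obtain ⟨ε, hε, hεη, hεβ⟩ : ∃ ε : ℝ, 0 < ε ∧ ε ≤ η ∧ 6 * ε ≤ η * β :=
    ⟨min η (η * β / 6), by positivity, min_le_left _ _, by linarith [min_le_right η (η * β / 6)]⟩
  obtain ⟨T, hT⟩ := exists_lowerRegular_coloring hε
  obtain ⟨σ, hσ, hσT⟩ := exists_pos_mul_lt
    (by positivity : 0 < min (ε * (η * (ε / (T + 1))) ^ 3) η) (16 + 5 * ((T : ℝ) + 1) ^ 3)
  have hσT' := lt_min_iff.1 hσT
  rw [add_mul] at hσT'
  have hσ₁ : 0 ≤ 5 * ((T : ℝ) + 1) ^ 3 * σ := by positivity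
  refine ⟨η * σ, by positivity, fun V _ _ H h3 hdeg hn => ?_⟩
  have : Nonempty V := by
    by_contra! h
    norm_num [Fintype.card_eq_zero] at hn
  obtain ⟨ι, _, _, c, hι, hirr⟩ :=
    hT V (edgeIndicator H) (edgeIndicator_nonneg H) (edgeIndicator_le_one H)
  have hιT : (Fintype.card ι : ℝ) ≤ T + 1 := by exact_mod_cast hι.trans T.le_succ
  obtain ⟨q, k, f, hf, hk, hcover⟩ := exists_isPathFamily_of_card_le h3 hβ hdeg hη₁ hε hεη hεβ hirr
    (by positivity) hιT hσ.le (by linarith) (by linarith) hn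
  refine ⟨q, k, f, hf, hk, le_trans ?_ hcover⟩
  gcongr

theorem path_tiling_lemma (γ α : ℝ) (hγ : 0 < γ) (hα : 0 < α) :
    ∃ p n₀ : ℕ, ∀ (V : Type) [Fintype V] [DecidableEq V], ∀ (H : Finset (Finset V)) (n : ℕ),
      Fintype.card V = n → n₀ < n →
      (∀ e ∈ H, e.card = 3) →
      (∀ v : V, (7 / 16 + γ) * (n.choose 2 : ℝ) ≤
        ((H.filter (fun e => v ∈ e)).card : ℝ)) →
      ∃ (q : ℕ) (ks : Fin q → ℕ) (fs : Fin q → ℕ → V),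
        q ≤ p ∧
        (∀ i, IsLoosePath H (ks i) (fs i)) ∧
        (∀ i j, i ≠ j → Disjoint (pathVerts (ks i) (fs i)) (pathVerts (ks j) (fs j))) ∧
        (((Finset.univ \ Finset.univ.biUnion fun i => pathVerts (ks i) (fs i)).card : ℝ)
          ≤ α * n) := by
  obtain ⟨δ, hδ, hpaths⟩ := exists_isPathFamily_of_le_sum_edgeIndicator (half_pos hγ) hα
  refine ⟨⌊1 / δ⌋₊, ⌈max (1 / δ) ((7 / 8 + 2 * γ) / γ)⌉₊, fun V _ _ H n hV hn h3 hdeg => ?_⟩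
  subst hV
  obtain ⟨hn₁, hn₂⟩ := max_lt_iff.1 (Nat.lt_of_ceil_lt hn)
  rw [div_lt_iff₀' hδ] at hn₁
  rw [div_lt_iff₀' hγ] at hn₂
  obtain ⟨q, k, f, hf, hk, hcover⟩ :=
    hpaths V H h3 (add_mul_sq_le_sum_edgeIndicator h3 hn₂.le hdeg) hn₁.le
  refine ⟨q, fun _ => k, f, Nat.le_floor ?_, hf.isLoosePath, fun _ _ hij => hf.disjoint hij, ?_⟩
  · rw [le_div_iff₀ hδ]
    simpa using hf.card_mul_le_one hδ.le hk
  · rw [cast_card_sdiff (subset_univ _), hf.card_biUnion_pathVerts, card_univ, Fintype.card_fin]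
    push_cast
    linarith
end
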